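/- arXiv:2305.18796 — 5 statements merged into one kernel-verified Lean document; each statement's English description precedes it below -/
import Mathlib

section
/- Let (G_i)_{i∈ℕ} be a family of finitely generated abelian groups. Then there exists a Dedekind domain D that is not a field with the following properties: (1) Cl(D) is isomorphic to the direct sum ⊕_{i∈ℕ} G_i; (2) for each i ∈ ℕ there is a multiplicative submonoid S_i ⊆ D ∖ {0} such that the localization D_{S_i} (which is again a Dedekind domain) satisfies Cl(D_{S_i}) ≅ G_i; (3) every class of Cl(D) contains infinitely many nonzero prime ideals of D, and for each i ∈ ℕ every class of Cl(D_{S_i}) contains infinitely many nonzero prime ideals of D_{S_i}. -/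
open scoped DirectSum nonZeroDivisors

/-- The set of nonzero primes in a given class. -/
def primesIn (D : Type) [CommRing D] [IsDedekindDomain D] (g : ClassGroup D) : Set ((Ideal D)⁰) :=
  { P : (Ideal D)⁰ | (P : Ideal D).IsPrime ∧ ClassGroup.mk0 P = g }

set_option maxHeartbeats 1000000 in
theorem exists_loc (D : Type) [CommRing D] [IsDedekindDomain D] (H : Subgroup (ClassGroup D))
    (h1 : ∀ g ∈ H, g ≠ 1 → (primesIn D g).Nonempty)
    (h2 : ∀ g : ClassGroup D, ∃ h ∈ H, (primesIn D (g * h)).Infinite) :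
    ∃ (S : Submonoid D) (_ : S ≤ nonZeroDivisors D) (_ : IsDedekindDomain (Localization S)),
      Nonempty (ClassGroup (Localization S) ≃* ClassGroup D ⧸ H) ∧
      ∀ g : ClassGroup (Localization S), (primesIn (Localization S) g).Infinite := by
  classical
  choose! Pr hPr using h1
  let S : Submonoid D :=
    { carrier := {a | a ≠ 0 ∧ ∀ P : (Ideal D)⁰, (P : Ideal D).IsPrime → a ∈ (P : Ideal D) →
        ∃ g ∈ H, g ≠ 1 ∧ P = Pr g}
      one_mem' := ⟨one_ne_zero, fun P hP h => absurd ((Ideal.eq_top_iff_one _).2 h) hP.ne_top⟩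
      mul_mem' := by
        rintro a b ⟨ha, ha'⟩ ⟨hb, hb'⟩
        refine ⟨mul_ne_zero ha hb, fun P hP h => ?_⟩
        rcases hP.mem_or_mem h with h | h
        · exact ha' P hP h
        · exact hb' P hP h }
  have hS : S ≤ D⁰ := fun a ha => mem_nonZeroDivisors_of_ne_zero ha.1
  have hmemS : ∀ a, a ∈ S ↔ (a ≠ 0 ∧ ∀ P : (Ideal D)⁰, (P : Ideal D).IsPrime → a ∈ (P : Ideal D) →
        ∃ g ∈ H, g ≠ 1 ∧ P = Pr g) := fun a => Iff.rfl
  clear_value S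
  have hdom : IsDomain (Localization S) := IsLocalization.isDomain_localization hS
  have hDD : IsDedekindDomain (Localization S) := IsLocalization.isDedekindDomain D hS _
  have hinj : Function.Injective (algebraMap D (Localization S)) := IsLocalization.injective _ hS
  have : FaithfulSMul D (Localization S) := (faithfulSMul_iff_algebraMap_injective _ _).2 hinj
  have : Module.IsTorsionFree D (Localization S) := inferInstance
  let φ := ClassGroup.extendedHom D (Localization S)
  have hφ : ∀ I : (Ideal D)⁰, φ (ClassGroup.mk0 I) = ClassGroup.mk0 (ClassGroup.extendedIdeal D (Localization S) I) :=
    fun I => ClassGroup.extendedHom_mk0 D (Localization S) I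
  have hext : ∀ I : (Ideal D)⁰, (ClassGroup.extendedIdeal D (Localization S) I : Ideal (Localization S)) = (I : Ideal D).map (algebraMap D (Localization S)) := fun I => rfl
  have hsurj : Function.Surjective φ := by
    intro c
    obtain ⟨J, rfl⟩ := ClassGroup.mk0_surjective c
    have hJ : (J : Ideal (Localization S)) ≠ ⊥ := nonZeroDivisors.coe_ne_zero J
    have hmap := IsLocalization.map_under S (Localization S) (J : Ideal (Localization S))
    have hne : (J : Ideal (Localization S)).under D ≠ ⊥ := by
      intro h
      rw [h, Ideal.map_bot] at hmap
      exact hJ hmap.symm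
    refine ⟨ClassGroup.mk0 ⟨_, mem_nonZeroDivisors_of_ne_zero hne⟩, ?_⟩
    rw [hφ]
    congr 1
    exact Subtype.ext hmap
  -- ideals meeting S have class in H
  have hmeet : ∀ (I : Ideal D) (hI : I ≠ ⊥), (∃ s ∈ S, s ∈ I) → 
      ClassGroup.mk0 ⟨I, mem_nonZeroDivisors_of_ne_zero hI⟩ ∈ H := by
    intro I
    induction I using UniqueFactorizationMonoid.induction_on_prime with
    | h₁ => intro h; exact absurd rfl h
    | h₂ I hu =>
      intro hI _
      have : ClassGroup.mk0 ⟨I, mem_nonZeroDivisors_of_ne_zero hI⟩ = 1 := by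
        rw [ClassGroup.mk0_eq_one_iff]
        rw [Ideal.isUnit_iff] at hu
        rw [hu]; exact top_isPrincipal
      rw [this]; exact H.one_mem
    | h₃ I P hI hP ih =>
      rintro hPI ⟨s, hs, hsI⟩
      have h2 := ih hI ⟨s, hs, (Ideal.mul_le_inf.trans inf_le_right : P * I ≤ I) hsI⟩
      have hP0 : P ≠ ⊥ := hP.ne_zero
      have h3 : ClassGroup.mk0 ⟨P, mem_nonZeroDivisors_of_ne_zero hP0⟩ ∈ H := by
        obtain ⟨g, hg, hg1, h⟩ := ((hmemS s).1 hs).2 ⟨P, mem_nonZeroDivisors_of_ne_zero hP0⟩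
          (Ideal.isPrime_of_prime hP) ((Ideal.mul_le_inf.trans inf_le_left : P * I ≤ P) hsI)
        rw [h, (hPr g hg hg1).2]
        exact hg
      have := H.mul_mem h3 h2
      rw [← map_mul] at this
      exact this
  have hker : φ.ker = H := by
    ext c
    obtain ⟨I, rfl⟩ := ClassGroup.mk0_surjective c
    rw [MonoidHom.mem_ker]
    constructor
    · intro h
      rw [hφ] at h
      obtain ⟨b, hb⟩ := (ClassGroup.mk0_eq_one_iff (ClassGroup.extendedIdeal D (Localization S) I).2).1 h
      rw [hext] at hb
      obtain ⟨a, s, rfl⟩ := IsLocalization.exists_mk'_eq S b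
      have hb' : (I : Ideal D).map (algebraMap D (Localization S)) =
          (Ideal.span {a}).map (algebraMap D (Localization S)) := by
        rw [hb, Ideal.map_span, Set.image_singleton]
        change Ideal.span _ = _
        rw [Ideal.span_singleton_eq_span_singleton]
        refine ⟨(IsLocalization.map_units (Localization S) s).unit, ?_⟩
        simp
      have hI0 : (I : Ideal D) ≠ ⊥ := nonZeroDivisors.coe_ne_zero I
      have ha0 : a ≠ 0 := by
        rintro rfl
        rw [Ideal.span_singleton_eq_bot.2 rfl, Ideal.map_bot, Ideal.map_eq_bot_iff_of_injective hinj] at hb'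
        exact hI0 hb'
      have hx : ∀ x ∈ (I : Ideal D), ∃ m ∈ S, a ∣ m * x := by
        intro x hx
        have := Ideal.mem_map_of_mem (algebraMap D (Localization S)) hx
        rw [hb', IsLocalization.algebraMap_mem_map_algebraMap_iff S] at this
        simpa [Ideal.mem_span_singleton] using this
      choose! m hmS hm using hx
      obtain ⟨T, hT⟩ := IsNoetherian.noetherian (I : Ideal D)
      have hTI : ∀ x ∈ T, x ∈ (I : Ideal D) := fun x hx => hT ▸ Submodule.subset_span hx
      let t := ∏ x ∈ T, m x
      have htS : t ∈ S := S.prod_mem fun x hx => hmS x (hTI x hx)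
      have htI : Ideal.span {t} * (I : Ideal D) ≤ Ideal.span {a} := by
        rw [← hT]
        change Ideal.span {t} * Ideal.span _ ≤ _
        rw [Ideal.span_mul_span', Ideal.span_le]
        rintro _ ⟨u, hu, x, hx, rfl⟩
        rw [Set.mem_singleton_iff] at hu
        subst hu
        rw [SetLike.mem_coe, Ideal.mem_span_singleton]
        exact (hm x (hTI x hx)).trans (mul_dvd_mul_right (Finset.dvd_prod_of_mem _ hx) _)
      obtain ⟨J, hJ⟩ := Ideal.dvd_iff_le.2 htI
      have ht0 : t ≠ 0 := ((hmemS t).1 htS).1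
      have hJ0 : J ≠ ⊥ := by
        rintro rfl
        rw [Ideal.mul_bot, Ideal.mul_eq_bot] at hJ
        rcases hJ with h | h
        · exact ht0 (Ideal.span_singleton_eq_bot.1 h)
        · exact hI0 h
      have hcl : ClassGroup.mk0 I = ClassGroup.mk0 ⟨J, mem_nonZeroDivisors_of_ne_zero hJ0⟩ :=
        ClassGroup.mk0_eq_mk0_iff.2 ⟨t, a, ht0, ha0, hJ⟩
      rw [hcl]
      refine hmeet J hJ0 ?_
      have hmapt : (Ideal.span {t}).map (algebraMap D (Localization S)) = ⊤ := by
        apply Ideal.eq_top_of_isUnit_mem _ _ (IsLocalization.map_units (Localization S) ⟨t, htS⟩)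
        exact Ideal.mem_map_of_mem _ (Ideal.mem_span_singleton_self t)
      have hJt : J.map (algebraMap D (Localization S)) = ⊤ := by
        have := congrArg (Ideal.map (algebraMap D (Localization S))) hJ
        rw [Ideal.map_mul, Ideal.map_mul, hmapt, Ideal.top_mul, hb'] at this
        have hne : (Ideal.span {a}).map (algebraMap D (Localization S)) ≠ 0 := by
          rw [← hb']
          intro h
          exact hI0 ((Ideal.map_eq_bot_iff_of_injective hinj).1 h)
        have h2 := mul_left_cancel₀ hne ((mul_one _).trans this)
        rw [← h2, Ideal.one_eq_top]
      by_contra hcon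
      apply (IsLocalization.map_algebraMap_ne_top_iff_disjoint S (Localization S) J).2 _ hJt
      rw [Set.disjoint_left]
      intro s hs hsJ
      exact hcon ⟨s, hs, hsJ⟩
    · intro hH
      by_cases hone : ClassGroup.mk0 I = 1
      · rw [hone, map_one]
      obtain ⟨hp, hc⟩ := hPr _ hH hone
      have hH' := H.inv_mem hH
      have hone' : (ClassGroup.mk0 I)⁻¹ ≠ 1 := inv_ne_one.2 hone
      obtain ⟨hp', hc'⟩ := hPr _ hH' hone'
      generalize hP : Pr (ClassGroup.mk0 I) = P at *
      generalize hP' : Pr (ClassGroup.mk0 I)⁻¹ = P' at *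
      rw [← hc] at hc'
      rw [← hc]
      obtain ⟨x, hx0, hx⟩ := ClassGroup.mk0_eq_mk0_inv_iff.1 hc'
      have hxS : x ∈ S := by
        rw [hmemS]
        refine ⟨hx0, fun Q hQ hxQ => ?_⟩
        have hle : (P' : Ideal D) * P ≤ Q := by
          rw [hx, Ideal.span_singleton_le_iff_mem]; exact hxQ
        have hmax : ∀ P : (Ideal D)⁰, (P : Ideal D).IsPrime → (P : Ideal D) ≤ Q → Q = P := by
          intro P hP hPQ
          have := hP.isMaximal (nonZeroDivisors.coe_ne_zero P)
          exact Subtype.ext (this.eq_of_le hQ.ne_top hPQ).symm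
        rcases hQ.mul_le.1 hle with h | h
        · exact ⟨_, hH', hone', by rw [hP']; exact hmax _ hp' h⟩
        · exact ⟨_, hH, hone, by rw [hP]; exact hmax _ hp h⟩
      rw [hφ, ClassGroup.mk0_eq_one_iff]
      have : (P : Ideal D).map (algebraMap D (Localization S)) = ⊤ := by
        apply Ideal.eq_top_of_isUnit_mem _ _ (IsLocalization.map_units (Localization S) ⟨x, hxS⟩)
        apply Ideal.mem_map_of_mem
        have hxm : x ∈ (P' : Ideal D) * P := by
          rw [hx]
          exact Ideal.mem_span_singleton_self x
        exact (Ideal.mul_le_inf.trans inf_le_right : (P' : Ideal D) * P ≤ P) hxm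
      rw [this]
      exact top_isPrincipal
  refine ⟨S, hS, hDD, ⟨(QuotientGroup.quotientKerEquivOfSurjective φ hsurj).symm.trans (QuotientGroup.quotientMulEquivOfEq hker)⟩, ?_⟩
  intro c
  obtain ⟨g, rfl⟩ := hsurj c
  obtain ⟨h, hh, hinf⟩ := h2 g
  have hφh : φ h = 1 := by rw [← MonoidHom.mem_ker, hker]; exact hh
  have hinf' : (primesIn D (g * h) \ {Pr (g * h)}).Infinite := hinf.sdiff (Set.finite_singleton _)
  have hdisj : ∀ P ∈ primesIn D (g * h) \ {Pr (g * h)}, Disjoint (S : Set D) ((P : Ideal D) : Set D) := by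
    rintro P ⟨⟨hP, hPc⟩, hne⟩
    rw [Set.disjoint_left]
    intro s hs hsP
    obtain ⟨k, hk, hk1, rfl⟩ := ((hmemS s).1 hs).2 P hP hsP
    apply hne
    rw [(hPr k hk hk1).2] at hPc
    rw [hPc]; rfl
  refine (hinf'.image (f := ClassGroup.extendedIdeal D (Localization S)) ?_).mono ?_
  · intro P hP Q hQ hPQ
    have h1 := IsLocalization.under_map_of_isPrime_disjoint S (Localization S) hP.1.1 (hdisj P hP)
    have h2 := IsLocalization.under_map_of_isPrime_disjoint S (Localization S) hQ.1.1 (hdisj Q hQ)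
    rw [← hext] at h1 h2
    apply Subtype.ext
    rw [← h1, ← h2, hPQ]
  · rintro _ ⟨P, hP, rfl⟩
    refine ⟨?_, ?_⟩
    · rw [hext]
      exact IsLocalization.isPrime_of_isPrime_disjoint S _ _ hP.1.1 (hdisj P hP)
    · rw [← hφ, hP.1.2, map_mul, hφh, mul_one]

/-- A strongly graded domain with good factorization properties. -/
structure GData (Γ A : Type) [AddCommGroup Γ] [CommRing A] where
  M : Γ → AddSubgroup A
  one_mem : 1 ∈ M 0
  mul_mem : ∀ {γ δ a b}, a ∈ M γ → b ∈ M δ → a * b ∈ M (γ + δ)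
  div_mem : ∀ {γ δ a b}, a ∈ M γ → a ≠ 0 → a * b ∈ M δ → b ∈ M (δ - γ)
  strong : ∀ γ, ∃ q₁ ∈ M (-γ), ∃ q₂ ∈ M (-γ), ∃ h₁ ∈ M γ, ∃ h₂ ∈ M γ, q₁ * h₁ + q₂ * h₂ = 1
  factor : ∀ a ∈ M 0, a ≠ 0 → ∃ m : Multiset A, (∀ p ∈ m, Prime p ∧ ∃ γ, p ∈ M γ) ∧
    Associated m.prod a
  unit_mem : ∀ {u}, IsUnit u → u ∈ M 0
  deg_unique : ∀ {a γ δ}, a ≠ 0 → a ∈ M γ → a ∈ M δ → γ = δ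
  avoid : ∀ a ∈ M 0, ∀ b ∈ M 0, a ≠ 0 → b ≠ 0 → (∀ p, Prime p → p ∣ a → ¬ p ∣ b) →
    ∃ t ∈ M 0, IsUnit (a + t * b)
  primes : ∀ γ, γ ≠ 0 → ∃ f : ℕ → A, (∀ n, Prime (f n) ∧ f n ∈ M γ) ∧
    ∀ n m, Associated (f n) (f m) → n = m

set_option linter.unusedSectionVars false

namespace GData

variable {Γ A : Type} [AddCommGroup Γ] [CommRing A] [IsDomain A] (𝒢 : GData Γ A)

/-- The degree zero part. -/
def B : Subring A where
  carrier := 𝒢.M 0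
  one_mem' := 𝒢.one_mem
  mul_mem' := fun ha hb => by
    have := 𝒢.mul_mem ha hb
    rwa [add_zero] at this
  zero_mem' := (𝒢.M 0).zero_mem
  add_mem' := fun ha hb => (𝒢.M 0).add_mem ha hb
  neg_mem' := fun ha => (𝒢.M 0).neg_mem ha

theorem mem_B {a : A} : a ∈ 𝒢.B ↔ a ∈ 𝒢.M 0 := Iff.rfl

/-- The contraction of the principal ideal generated by `f`. -/
def I (f : A) : Ideal 𝒢.B := (Ideal.span {f}).comap 𝒢.B.subtype

theorem mem_I {f : A} {z : 𝒢.B} : z ∈ 𝒢.I f ↔ f ∣ (z : A) := by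
  rw [I, Ideal.mem_comap, Ideal.mem_span_singleton]; rfl

theorem mem_zero_of {γ : Γ} {a b : A} (ha : a ∈ 𝒢.M γ) (hb : b ∈ 𝒢.M (-γ)) : a * b ∈ 𝒢.B := by
  have := 𝒢.mul_mem ha hb
  rwa [add_neg_cancel] at this

theorem I_eq_span {f : A} {γ : Γ} (hf : f ∈ 𝒢.M γ) (hf0 : f ≠ 0) :
    (𝒢.I f).FG := by
  obtain ⟨q₁, hq₁, q₂, hq₂, h₁, hh₁, h₂, hh₂, e⟩ := 𝒢.strong γ
  let u : 𝒢.B := ⟨f * q₁, 𝒢.mem_zero_of hf hq₁⟩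
  let v : 𝒢.B := ⟨f * q₂, 𝒢.mem_zero_of hf hq₂⟩
  classical
  refine ⟨{u, v}, le_antisymm ?_ ?_⟩
  · rw [Submodule.span_le]
    intro x hx
    simp only [Finset.coe_insert, Finset.coe_singleton, Set.mem_insert_iff,
      Set.mem_singleton_iff] at hx
    rw [SetLike.mem_coe, mem_I]
    rcases hx with rfl | rfl
    · exact Dvd.intro _ rfl
    · exact Dvd.intro _ rfl
  · intro z hz
    obtain ⟨w, hw⟩ := 𝒢.mem_I.1 hz
    have hw' : w ∈ 𝒢.M (-γ) := by
      have hz2 : (z : A) ∈ 𝒢.M 0 := z.2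
      rw [hw] at hz2
      simpa using 𝒢.div_mem hf hf0 hz2
    have : z = ⟨h₁ * w, 𝒢.mem_zero_of hh₁ hw'⟩ * u + ⟨h₂ * w, 𝒢.mem_zero_of hh₂ hw'⟩ * v := by
      apply Subtype.ext
      simp only [Subring.coe_add, Subring.coe_mul, u, v]
      rw [hw]
      linear_combination (-f * w) * e
    rw [this]
    refine Submodule.add_mem _ (Ideal.mul_mem_left _ _ (Submodule.subset_span ?_))
      (Ideal.mul_mem_left _ _ (Submodule.subset_span ?_)) <;> simp

theorem I_mul {f g : A} {γ δ : Γ} (hf : f ∈ 𝒢.M γ) (hf0 : f ≠ 0) (hg : g ∈ 𝒢.M δ) (hg0 : g ≠ 0) :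
    𝒢.I f * 𝒢.I g = 𝒢.I (f * g) := by
  apply le_antisymm
  · rw [Ideal.mul_le]
    intro r hr s hs
    rw [mem_I] at *
    exact mul_dvd_mul hr hs
  · intro z hz
    obtain ⟨q₁, hq₁, q₂, hq₂, h₁, hh₁, h₂, hh₂, e⟩ := 𝒢.strong γ
    obtain ⟨w, hw⟩ := 𝒢.mem_I.1 hz
    have hw' : w ∈ 𝒢.M (-(γ + δ)) := by
      have hz2 : (z : A) ∈ 𝒢.M 0 := z.2
      rw [hw] at hz2
      simpa using 𝒢.div_mem (𝒢.mul_mem hf hg) (mul_ne_zero hf0 hg0) hz2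
    have key : ∀ h ∈ 𝒢.M γ, g * (h * w) ∈ 𝒢.B := fun h hh => by
      refine 𝒢.mem_zero_of hg ?_
      have := 𝒢.mul_mem hh hw'
      rwa [show γ + -(γ + δ) = -δ by abel] at this
    have : z = ⟨f * q₁, 𝒢.mem_zero_of hf hq₁⟩ * ⟨g * (h₁ * w), key _ hh₁⟩ +
        ⟨f * q₂, 𝒢.mem_zero_of hf hq₂⟩ * ⟨g * (h₂ * w), key _ hh₂⟩ := by
      apply Subtype.ext
      simp only [Subring.coe_add, Subring.coe_mul]
      rw [hw]
      linear_combination (-f * g * w) * e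
    rw [this]
    refine Submodule.add_mem _ (Ideal.mul_mem_mul ?_ ?_) (Ideal.mul_mem_mul ?_ ?_) <;> 
    · rw [mem_I]; exact Dvd.intro _ rfl

theorem I_zero {a : 𝒢.B} (ha : a ≠ 0) : 𝒢.I (a : A) = Ideal.span {a} := by
  ext z
  rw [mem_I, Ideal.mem_span_singleton]
  constructor
  · rintro ⟨w, hw⟩
    have hw' : w ∈ 𝒢.B := by
      have hz2 : (z : A) ∈ 𝒢.M 0 := z.2
      rw [hw] at hz2
      have := 𝒢.div_mem a.2 (fun h => ha (Subtype.ext h)) hz2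
      rwa [sub_zero] at this
    exact ⟨⟨w, hw'⟩, Subtype.ext hw⟩
  · rintro ⟨w, rfl⟩
    exact Dvd.intro _ rfl

theorem dvd_of_le {f g : A} {γ : Γ} (hf : f ∈ 𝒢.M γ) (h : 𝒢.I f ≤ 𝒢.I g) : g ∣ f := by
  obtain ⟨q₁, hq₁, q₂, hq₂, h₁, hh₁, h₂, hh₂, e⟩ := 𝒢.strong γ
  have d1 : g ∣ f * q₁ := 
    𝒢.mem_I.1 (h (x := ⟨f * q₁, 𝒢.mem_zero_of hf hq₁⟩) (𝒢.mem_I.2 (Dvd.intro _ rfl)))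
  have d2 : g ∣ f * q₂ := 
    𝒢.mem_I.1 (h (x := ⟨f * q₂, 𝒢.mem_zero_of hf hq₂⟩) (𝒢.mem_I.2 (Dvd.intro _ rfl)))
  have : f = f * q₁ * h₁ + f * q₂ * h₂ := by linear_combination (-f) * e
  rw [this]
  exact dvd_add (d1.mul_right _) (d2.mul_right _)

theorem le_of_dvd {f g : A} (h : g ∣ f) : 𝒢.I f ≤ 𝒢.I g := fun z hz => by
  rw [mem_I] at *
  exact h.trans hz

theorem I_ne_bot {f : A} {γ : Γ} (hf : f ∈ 𝒢.M γ) (hf0 : f ≠ 0) : 𝒢.I f ≠ ⊥ := by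
  intro h
  have : 𝒢.I f ≤ 𝒢.I 0 := by rw [h]; exact bot_le
  exact hf0 (zero_dvd_iff.1 (𝒢.dvd_of_le hf this))

theorem I_prime {p : A} (hp : Prime p) : (𝒢.I p).IsPrime := by
  have := (Ideal.span_singleton_prime hp.ne_zero).2 hp
  exact Ideal.comap_isPrime _ _

theorem prod_le (m : Multiset A) : (m.map 𝒢.I).prod ≤ 𝒢.I m.prod := by
  induction m using Multiset.induction_on with
  | empty =>
    intro z _
    rw [mem_I]
    simp
  | cons a m ih =>
    rw [Multiset.map_cons, Multiset.prod_cons, Multiset.prod_cons]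
    refine (Ideal.mul_mono_right ih).trans ?_
    rw [Ideal.mul_le]
    intro r hr s hs
    rw [mem_I] at *
    exact mul_dvd_mul hr hs

theorem eq_top_of_unit {Q : Ideal 𝒢.B} {u : 𝒢.B} (hu : IsUnit (u : A)) (huQ : u ∈ Q) : Q = ⊤ := by
  obtain ⟨v, hv⟩ := hu.exists_right_inv
  have hv' : v ∈ 𝒢.B := 𝒢.unit_mem (IsUnit.of_mul_eq_one_right _ hv)
  rw [Ideal.eq_top_iff_one]
  have : (1 : 𝒢.B) = ⟨v, hv'⟩ * u := Subtype.ext (by simpa [mul_comm] using hv.symm)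
  rw [this]
  exact Ideal.mul_mem_left _ _ huQ

theorem eq_I_of_prime {Q : Ideal 𝒢.B} (hQ : Q.IsPrime) (hQ0 : Q ≠ ⊥) :
    ∃ p γ, Prime p ∧ p ∈ 𝒢.M γ ∧ Q = 𝒢.I p := by
  classical
  obtain ⟨a, haQ, ha0⟩ := Submodule.exists_mem_ne_zero_of_ne_bot hQ0
  have ha0' : (a : A) ≠ 0 := fun h => ha0 (Subtype.ext h)
  obtain ⟨m, hm, hma⟩ := 𝒢.factor a a.2 ha0'
  have step1 : ∃ p ∈ m, Q ≤ 𝒢.I p := by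
    have := (Ideal.subset_union_prime (s := m.toFinset) (f := 𝒢.I) 0 0
      (fun i hi _ _ => 𝒢.I_prime (hm i (Multiset.mem_toFinset.1 hi)).1) (I := Q))
    simp only [Multiset.mem_toFinset] at this
    rw [← this]
    by_contra hcon
    obtain ⟨b, hbQ, hb⟩ := Set.not_subset.1 hcon
    have hb' : ∀ p ∈ m, ¬ p ∣ (b : A) := by
      intro p hp hpb
      apply hb
      simp only [Set.mem_iUnion]
      exact ⟨p, by simpa using hp, 𝒢.mem_I.2 hpb⟩
    have hnd : ∀ p, Prime p → p ∣ (a : A) → ¬ p ∣ (b : A) := by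
      intro p hp hpa hpb
      rw [← hma.dvd_iff_dvd_right] at hpa
      obtain ⟨q, hq, hpq⟩ := hp.exists_mem_multiset_dvd hpa
      exact hb' q hq ((hp.associated_of_dvd (hm q hq).1 hpq).dvd_iff_dvd_left.1 hpb)
    have : ∃ t ∈ 𝒢.M 0, IsUnit ((a : A) + t * b) := by
      by_cases hb0 : (b : A) = 0
      · refine ⟨0, (𝒢.M 0).zero_mem, ?_⟩
        have hm0 : m = 0 := by
          apply Multiset.eq_zero_of_forall_notMem
          intro p hp
          exact hb' p hp (hb0 ▸ dvd_zero p)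
        rw [hm0, Multiset.prod_zero] at hma
        rw [zero_mul, add_zero]
        exact associated_one_iff_isUnit.1 hma.symm
      · exact 𝒢.avoid a a.2 b b.2 ha0' hb0 hnd
    obtain ⟨t, ht, hu⟩ := this
    apply hQ.ne_top
    exact 𝒢.eq_top_of_unit (u := a + ⟨t, ht⟩ * b) hu (Q.add_mem haQ (Q.mul_mem_left _ hbQ))
  have step2 : ∃ p ∈ m, 𝒢.I p ≤ Q := by
    rw [← hQ.multiset_prod_map_le]
    refine (𝒢.prod_le m).trans ?_
    refine (𝒢.le_of_dvd hma.symm.dvd).trans ?_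
    rw [𝒢.I_zero ha0, Ideal.span_singleton_le_iff_mem]
    exact haQ
  obtain ⟨p, hp, h1⟩ := step1
  obtain ⟨p', hp', h2⟩ := step2
  obtain ⟨hpp, γ, hγ⟩ := hm p hp
  obtain ⟨hpp', γ', hγ'⟩ := hm p' hp'
  have hd := 𝒢.dvd_of_le hγ' (h2.trans h1)
  have has := hpp.associated_of_dvd hpp' hd
  exact ⟨p, γ, hpp, hγ, le_antisymm h1 ((𝒢.le_of_dvd has.symm.dvd).trans h2)⟩

theorem isDedekindDomain [IsIntegrallyClosed A] : IsDedekindDomain 𝒢.B := by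
  have hN : IsNoetherianRing 𝒢.B := IsNoetherianRing.of_prime_ne_bot fun Q hQ hQ0 => by
    obtain ⟨p, γ, hp, hγ, rfl⟩ := 𝒢.eq_I_of_prime hQ hQ0
    exact 𝒢.I_eq_span hγ hp.ne_zero
  have hD : Ring.DimensionLEOne 𝒢.B := ⟨fun {Q} hQ0 hQ => by
    obtain ⟨N, hN, hQN⟩ := Q.exists_le_maximal hQ.ne_top
    have hN0 : N ≠ ⊥ := fun h => hQ0 (le_bot_iff.1 (h ▸ hQN))
    obtain ⟨p, γ, hp, hγ, rfl⟩ := 𝒢.eq_I_of_prime hQ hQ0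
    obtain ⟨p', γ', hp', hγ', rfl⟩ := 𝒢.eq_I_of_prime hN.isPrime hN0
    have has := hp'.associated_of_dvd hp (𝒢.dvd_of_le hγ hQN)
    have : 𝒢.I p = 𝒢.I p' := le_antisymm hQN (𝒢.le_of_dvd has.symm.dvd)
    rw [this]; exact hN⟩
  have hI : IsIntegrallyClosed 𝒢.B := by
    rw [isIntegrallyClosed_iff (FractionRing 𝒢.B)]
    intro x hx
    obtain ⟨a, b, hb, rfl⟩ := IsFractionRing.div_surjective (A := 𝒢.B) x
    have hb0 : b ≠ 0 := nonZeroDivisors.ne_zero hb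
    have hb0' : (b : A) ≠ 0 := fun h => hb0 (Subtype.ext h)
    have hinj : Function.Injective (algebraMap 𝒢.B (FractionRing A)) := by
      rw [IsScalarTower.algebraMap_eq 𝒢.B A (FractionRing A)]
      exact (IsFractionRing.injective A (FractionRing A)).comp Subtype.val_injective
    let ψ : FractionRing 𝒢.B →ₐ[𝒢.B] FractionRing A := IsFractionRing.liftAlgHom (g := Algebra.ofId 𝒢.B (FractionRing A)) hinj
    have hx' := hx.map ψ
    have hx2 : IsIntegral A (ψ (algebraMap _ _ a / algebraMap _ _ b)) := hx'.tower_top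
    obtain ⟨c, hc⟩ := (isIntegrallyClosed_iff (FractionRing A)).1 inferInstance hx2
    rw [map_div₀, AlgHom.commutes, AlgHom.commutes, eq_div_iff (by
      intro h; exact hb0 (hinj (h.trans (map_zero _).symm))),
      IsScalarTower.algebraMap_apply 𝒢.B A (FractionRing A), 
      IsScalarTower.algebraMap_apply 𝒢.B A (FractionRing A), ← map_mul] at hc
    have hc' : c * b = (a : A) := IsFractionRing.injective A (FractionRing A) hc
    have hcB : c ∈ 𝒢.B := by
      have ha2 : (a : A) ∈ 𝒢.M 0 := a.2
      rw [← hc', mul_comm] at ha2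
      have := 𝒢.div_mem b.2 hb0' ha2
      rwa [sub_zero] at this
    refine ⟨⟨c, hcB⟩, ?_⟩
    rw [eq_div_iff (by simpa using hb0), ← map_mul]
    congr 1
    exact Subtype.ext hc'
  exact { hN, hD, hI, (inferInstance : IsDomain 𝒢.B) with }

theorem exists_ne_zero [IsIntegrallyClosed A] (γ : Γ) : ∃ f ∈ 𝒢.M γ, f ≠ 0 := by
  obtain ⟨q₁, hq₁, q₂, hq₂, h₁, hh₁, h₂, hh₂, e⟩ := 𝒢.strong γ
  by_contra! h
  rw [h _ hh₁, h _ hh₂] at e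
  simp at e

theorem main [IsIntegrallyClosed A] : ∃ _ : IsDedekindDomain 𝒢.B,
    ∃ e : Multiplicative Γ ≃* ClassGroup 𝒢.B, 
      ∀ γ : Γ, γ ≠ 0 → (primesIn 𝒢.B (e (Multiplicative.ofAdd γ))).Infinite := by
  have hDD := 𝒢.isDedekindDomain
  choose x hx hx0 using 𝒢.exists_ne_zero
  let J : ∀ f γ, f ∈ 𝒢.M γ → f ≠ 0 → (Ideal 𝒢.B)⁰ := fun f γ hf hf0 => 
    ⟨𝒢.I f, mem_nonZeroDivisors_of_ne_zero (𝒢.I_ne_bot hf hf0)⟩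
  have hJ : ∀ f γ hf hf0, (J f γ hf hf0 : Ideal 𝒢.B) = 𝒢.I f := fun _ _ _ _ => rfl
  have hmk : ∀ f γ hf hf0, ClassGroup.mk0 (J f γ hf hf0) = ClassGroup.mk0 (J (x γ) γ (hx γ) (hx0 γ)) := by
    intro f γ hf hf0
    rw [ClassGroup.mk0_eq_mk0_iff]
    have h1 := 𝒢.mem_zero_of (hx γ) (hx (-γ))
    have h2 := 𝒢.mem_zero_of hf (hx (-γ))
    have h10 := mul_ne_zero (hx0 γ) (hx0 (-γ))
    have h20 := mul_ne_zero hf0 (hx0 (-γ))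
    have h10' : (⟨_, h1⟩ : 𝒢.B) ≠ 0 := fun h => h10 (congrArg Subtype.val h)
    have h20' : (⟨_, h2⟩ : 𝒢.B) ≠ 0 := fun h => h20 (congrArg Subtype.val h)
    refine ⟨⟨_, h1⟩, ⟨_, h2⟩, h10', h20', ?_⟩
    rw [← 𝒢.I_zero h10', ← 𝒢.I_zero h20', hJ f γ hf hf0, hJ _ γ (hx γ) (hx0 γ), 𝒢.I_mul h1 h10 hf hf0, 
      𝒢.I_mul h2 h20 (hx γ) (hx0 γ)]
    congr 1
    ring
  let φ : Multiplicative Γ →* ClassGroup 𝒢.B := MonoidHom.mk' 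
    (fun γ => ClassGroup.mk0 (J (x γ.toAdd) γ.toAdd (hx _) (hx0 _))) (by
      intro a b
      rw [← map_mul]
      have h3 := 𝒢.mul_mem (hx a.toAdd) (hx b.toAdd)
      have h30 := mul_ne_zero (hx0 a.toAdd) (hx0 b.toAdd)
      have := hmk (x a.toAdd * x b.toAdd) (a.toAdd + b.toAdd) h3 h30
      rw [toAdd_mul]
      refine this.symm.trans ?_
      congr 1
      apply Subtype.ext
      rw [hJ _ _ h3 h30]
      exact (𝒢.I_mul (hx _) (hx0 _) (hx _) (hx0 _)).symm)
  have hφ : ∀ γ, φ γ = ClassGroup.mk0 (J (x γ.toAdd) γ.toAdd (hx _) (hx0 _)) := fun _ => rfl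
  have hφinj : Function.Injective φ := by
    rw [injective_iff_map_eq_one]
    intro γ h
    rw [hφ, ClassGroup.mk0_eq_one_iff] at h
    obtain ⟨b, hb⟩ := h
    change 𝒢.I _ = Ideal.span {b} at hb
    have hb0 : b ≠ 0 := by
      rintro rfl
      rw [Ideal.span_singleton_eq_bot.2 rfl] at hb
      exact 𝒢.I_ne_bot (hx _) (hx0 _) hb
    rw [← 𝒢.I_zero hb0] at hb
    have d1 := 𝒢.dvd_of_le (hx _) hb.le
    have d2 := 𝒢.dvd_of_le b.2 hb.ge
    obtain ⟨u, hu⟩ := associated_of_dvd_dvd d1 d2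
    have h0 : x γ.toAdd ∈ 𝒢.M 0 := by
      rw [← hu]
      have := 𝒢.mul_mem b.2 (𝒢.unit_mem u.isUnit)
      rwa [add_zero] at this
    exact 𝒢.deg_unique (hx0 γ.toAdd) (hx γ.toAdd) h0
  have hφsurj : Function.Surjective φ := by
    intro c
    obtain ⟨⟨K, hK⟩, rfl⟩ := ClassGroup.mk0_surjective c
    rw [← MonoidHom.mem_range]
    induction K using UniqueFactorizationMonoid.induction_on_prime with
    | h₁ => exact absurd rfl (nonZeroDivisors.ne_zero hK)
    | h₂ K hu =>
      have : ClassGroup.mk0 ⟨K, hK⟩ = 1 := by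
        rw [ClassGroup.mk0_eq_one_iff]
        rw [Ideal.isUnit_iff] at hu
        rw [hu]; exact top_isPrincipal
      rw [this]; exact φ.range.one_mem
    | h₃ K P hK0 hP ih =>
      have h2 := ih (mem_nonZeroDivisors_of_ne_zero hK0)
      obtain ⟨p, γ, hp, hγ, h⟩ := 𝒢.eq_I_of_prime (Ideal.isPrime_of_prime hP) hP.ne_zero
      have h3 : ClassGroup.mk0 ⟨P, mem_nonZeroDivisors_of_ne_zero hP.ne_zero⟩ ∈ φ.range := by
        refine ⟨Multiplicative.ofAdd γ, ?_⟩
        rw [hφ]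
        refine (hmk p γ hγ hp.ne_zero).symm.trans ?_
        congr 1
        exact Subtype.ext h.symm
      have := φ.range.mul_mem h3 h2
      rw [← map_mul] at this
      exact this
  refine ⟨hDD, MulEquiv.ofBijective φ ⟨hφinj, hφsurj⟩, ?_⟩
  intro γ hγ
  obtain ⟨f, hf, hf2⟩ := 𝒢.primes γ hγ
  refine (Set.infinite_range_of_injective (f := fun n => J (f n) γ (hf n).2 (hf n).1.ne_zero) ?_).mono ?_
  · intro n m hnm
    have h : 𝒢.I (f n) = 𝒢.I (f m) := congrArg Subtype.val hnm
    apply hf2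
    exact associated_of_dvd_dvd (𝒢.dvd_of_le (hf m).2 h.ge) (𝒢.dvd_of_le (hf n).2 h.le)
  · rintro _ ⟨n, rfl⟩
    exact ⟨𝒢.I_prime (hf n).1, hmk _ _ (hf n).2 (hf n).1.ne_zero⟩

end GData

section Homog

open MvPolynomial

variable {Γ σ : Type} [AddCommGroup Γ] (w : σ → Γ)

theorem sum_comp_image [DecidableEq Γ] (f : MvPolynomial σ ℚ) :
    ∑ a ∈ f.support.image (Finsupp.weight w), weightedHomogeneousComponent w a f = f := by
  ext d
  rw [coeff_sum]
  simp only [coeff_weightedHomogeneousComponent]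
  rw [Finset.sum_ite_eq]
  split_ifs with h
  · rfl
  · by_contra h2
    exact h (Finset.mem_image_of_mem _ (mem_support_iff.mpr (Ne.symm h2)))

theorem comp_ne_zero [DecidableEq Γ] (f : MvPolynomial σ ℚ) {a : Γ}
    (ha : a ∈ f.support.image (Finsupp.weight w)) : weightedHomogeneousComponent w a f ≠ 0 := by
  obtain ⟨d, hd, rfl⟩ := Finset.mem_image.mp ha
  intro h
  have := congrArg (coeff d) h
  rw [coeff_weightedHomogeneousComponent, if_pos rfl, coeff_zero] at this
  exact mem_support_iff.mp hd this

theorem comp_mul_of_unique [DecidableEq Γ] (f g : MvPolynomial σ ℚ) {a b : Γ}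
    (ha : a ∈ f.support.image (Finsupp.weight w)) (hb : b ∈ g.support.image (Finsupp.weight w))
    (hu : UniqueAdd (f.support.image (Finsupp.weight w)) (g.support.image (Finsupp.weight w)) a b) :
    weightedHomogeneousComponent w (a + b) (f * g) ≠ 0 := by
  have key : weightedHomogeneousComponent w (a + b) (f * g) =
      weightedHomogeneousComponent w a f * weightedHomogeneousComponent w b g := by
    conv_lhs => rw [← sum_comp_image w f, ← sum_comp_image w g, Finset.sum_mul_sum, map_sum]
    simp only [map_sum]
    have hH : ∀ i j, IsWeightedHomogeneous w
        (weightedHomogeneousComponent w i f * weightedHomogeneousComponent w j g) (i + j) :=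
      fun i j => (weightedHomogeneousComponent_isWeightedHomogeneous i f).mul
        (weightedHomogeneousComponent_isWeightedHomogeneous j g)
    rw [Finset.sum_eq_single_of_mem a ha, Finset.sum_eq_single_of_mem b hb]
    · exact (hH a b).weightedHomogeneousComponent_same
    · intro j hj hjb
      refine (hH a j).weightedHomogeneousComponent_ne _ fun h => hjb (hu ha hj h.symm).2
    · intro i hi hia
      refine Finset.sum_eq_zero fun j hj => ?_
      refine (hH i j).weightedHomogeneousComponent_ne _ fun h => hia (hu hi hj h.symm).1
  rw [key]
  exact mul_ne_zero (comp_ne_zero w f ha) (comp_ne_zero w g hb)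

theorem homog_of_mul [TwoUniqueSums Γ] {f g : MvPolynomial σ ℚ} {d : Γ} (h0 : f * g ≠ 0)
    (h : IsWeightedHomogeneous w (f * g) d) :
    ∃ γ, IsWeightedHomogeneous w f γ ∧ IsWeightedHomogeneous w g (d - γ) := by
  classical
  have hd : ∀ a ∈ f.support.image (Finsupp.weight w), ∀ b ∈ g.support.image (Finsupp.weight w),
      UniqueAdd (f.support.image (Finsupp.weight w)) (g.support.image (Finsupp.weight w)) a b →
      a + b = d := by
    intro a ha b hb hu
    by_contra hne
    exact comp_mul_of_unique w f g ha hb hu (h.weightedHomogeneousComponent_ne _ hne)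
  have hf0 := left_ne_zero_of_mul h0
  have hg0 := right_ne_zero_of_mul h0
  have hA : (f.support.image (Finsupp.weight w)).Nonempty :=
    (support_nonempty.mpr hf0).image _
  have hB : (g.support.image (Finsupp.weight w)).Nonempty :=
    (support_nonempty.mpr hg0).image _
  have hcard : ¬ 1 < (f.support.image (Finsupp.weight w)).card *
      (g.support.image (Finsupp.weight w)).card := by
    intro hc
    obtain ⟨p, hp, q, hq, hpq, hup, huq⟩ := TwoUniqueSums.uniqueAdd_of_one_lt_card hc
    rw [Finset.mem_product] at hp hq
    have h1 := hd _ hp.1 _ hp.2 hup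
    have h2 := hd _ hq.1 _ hq.2 huq
    have := hup hq.1 hq.2 (h2.trans h1.symm)
    exact hpq (Prod.ext this.1.symm this.2.symm)
  have hA1 := hA.card_pos
  have hB1 := hB.card_pos
  have hA2 : (f.support.image (Finsupp.weight w)).card = 1 := by nlinarith
  have hB2 : (g.support.image (Finsupp.weight w)).card = 1 := by nlinarith
  obtain ⟨γ, hγ⟩ := Finset.card_eq_one.mp hA2
  obtain ⟨δ, hδ⟩ := Finset.card_eq_one.mp hB2
  have hf : IsWeightedHomogeneous w f γ := by
    intro e he
    have := Finset.mem_image_of_mem (Finsupp.weight w) (mem_support_iff.mpr he)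
    rw [hγ] at this
    exact Finset.mem_singleton.mp this
  have hg : IsWeightedHomogeneous w g δ := by
    intro e he
    have := Finset.mem_image_of_mem (Finsupp.weight w) (mem_support_iff.mpr he)
    rw [hδ] at this
    exact Finset.mem_singleton.mp this
  have := IsWeightedHomogeneous.inj_right h0 (hf.mul hg) h
  refine ⟨γ, hf, ?_⟩
  rw [← this, add_sub_cancel_left]
  exact hg

theorem homog_unit {u : MvPolynomial σ ℚ} (hu : IsUnit u) : IsWeightedHomogeneous w u 0 := by
  obtain ⟨r, -, rfl⟩ := MvPolynomial.isUnit_iff_eq_C_of_isReduced.mp hu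
  exact isWeightedHomogeneous_C w r

/-- The multiplicative set of products of homogeneous primes of degree zero. -/
def zeroSet : Submonoid (MvPolynomial σ ℚ) where
  carrier := {s | s ≠ 0 ∧ ∀ p, Prime p → p ∣ s → IsWeightedHomogeneous w p 0}
  one_mem' := ⟨one_ne_zero, fun p hp h => absurd (isUnit_of_dvd_one h) hp.not_isUnit⟩
  mul_mem' := fun {a b} ha hb => ⟨mul_ne_zero ha.1 hb.1, fun p hp h =>
    (hp.dvd_or_dvd h).elim (ha.2 p hp) (hb.2 p hp)⟩

theorem zeroSet_le : zeroSet w ≤ nonZeroDivisors _ :=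
  fun _ hs => mem_nonZeroDivisors_of_ne_zero hs.1

theorem zeroSet_homog {s : MvPolynomial σ ℚ} (hs : s ∈ zeroSet w) : IsWeightedHomogeneous w s 0 := by
  induction s using UniqueFactorizationMonoid.induction_on_prime with
  | h₁ => exact isWeightedHomogeneous_zero _ _ _
  | h₂ u hu => exact homog_unit w hu
  | h₃ a p ha hp ih =>
    have h1 := hs.2 p hp (dvd_mul_right _ _)
    have h2 := ih ⟨ha, fun q hq h => hs.2 q hq (h.mul_left _)⟩
    have := h1.mul h2
    rwa [add_zero] at this

theorem prime_mem_zeroSet {p : MvPolynomial σ ℚ} (hp : Prime p) (h : IsWeightedHomogeneous w p 0) :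
    p ∈ zeroSet w := by
  refine ⟨hp.ne_zero, fun q hq hqp => ?_⟩
  obtain ⟨u, hu⟩ := (hq.associated_of_dvd hp hqp).symm
  rw [← hu]
  have := h.mul (homog_unit w u.isUnit)
  rwa [add_zero] at this

theorem dvd_mem_zeroSet {s t : MvPolynomial σ ℚ} (hs : s ∈ zeroSet w) (h : t ∣ s) :
    t ∈ zeroSet w :=
  ⟨ne_zero_of_dvd_ne_zero hs.1 h, fun p hp hpt => hs.2 p hp (hpt.trans h)⟩

theorem homog_of_dvd [TwoUniqueSums Γ] {f g : MvPolynomial σ ℚ} {d : Γ} (h0 : f ≠ 0)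
    (h : IsWeightedHomogeneous w f d) (hg : g ∣ f) : ∃ γ, IsWeightedHomogeneous w g γ := by
  obtain ⟨k, rfl⟩ := hg
  obtain ⟨γ, h1, -⟩ := homog_of_mul w h0 h
  exact ⟨γ, h1⟩

/-- The localized ring. -/
abbrev ZLoc : Type := Localization (zeroSet w)

instance : IsDomain (ZLoc w) := IsLocalization.isDomain_localization (zeroSet_le w)

instance : IsIntegrallyClosed (ZLoc w) :=
  isIntegrallyClosed_of_isLocalization _ (zeroSet w) (zeroSet_le w)

theorem ζ_inj : Function.Injective (algebraMap (MvPolynomial σ ℚ) (ZLoc w)) :=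
  IsLocalization.injective _ (zeroSet_le w)

theorem ζ_unit {s : MvPolynomial σ ℚ} (hs : s ∈ zeroSet w) :
    IsUnit (algebraMap (MvPolynomial σ ℚ) (ZLoc w) s) :=
  IsLocalization.map_units (ZLoc w) ⟨s, hs⟩

theorem ζ_frac (a : ZLoc w) : ∃ r, ∃ s ∈ zeroSet w,
    a * algebraMap (MvPolynomial σ ℚ) (ZLoc w) s = algebraMap (MvPolynomial σ ℚ) (ZLoc w) r := by
  obtain ⟨⟨r, s⟩, h⟩ := IsLocalization.surj (zeroSet w) a
  exact ⟨r, s, s.2, h⟩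

theorem ζ_unit_mem {s : MvPolynomial σ ℚ}
    (h : IsUnit (algebraMap (MvPolynomial σ ℚ) (ZLoc w) s)) : s ∈ zeroSet w := by
  obtain ⟨b, hb⟩ := h.exists_right_inv
  obtain ⟨r, t, ht, e⟩ := ζ_frac w b
  refine dvd_mem_zeroSet w ht ⟨r, ζ_inj w ?_⟩
  rw [map_mul, ← e, ← mul_assoc, hb, one_mul]

theorem ζ_dvd_of_prime {p r : MvPolynomial σ ℚ} (hp : Prime p) (hps : p ∉ zeroSet w)
    (h : algebraMap (MvPolynomial σ ℚ) (ZLoc w) p ∣ algebraMap (MvPolynomial σ ℚ) (ZLoc w) r) :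
    p ∣ r := by
  obtain ⟨b, hb⟩ := h
  obtain ⟨k, t, ht, e⟩ := ζ_frac w b
  have h2 : r * t = p * k := by
    apply ζ_inj w
    rw [map_mul, map_mul, hb, ← e, mul_assoc]
  refine (hp.dvd_or_dvd ⟨k, h2⟩).resolve_right fun h => hps (dvd_mem_zeroSet w ht h)

theorem ζ_prime {p : MvPolynomial σ ℚ} (hp : Prime p) (hps : p ∉ zeroSet w) :
    Prime (algebraMap (MvPolynomial σ ℚ) (ZLoc w) p) := by
  refine ⟨fun h => hp.ne_zero (ζ_inj w (h.trans (map_zero _).symm)),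
    fun h => hps (ζ_unit_mem w h), fun a b hab => ?_⟩
  obtain ⟨r, s, hs, e⟩ := ζ_frac w a
  obtain ⟨r', s', hs', e'⟩ := ζ_frac w b
  have h1 : algebraMap (MvPolynomial σ ℚ) (ZLoc w) p ∣
      algebraMap (MvPolynomial σ ℚ) (ZLoc w) (r * r') := by
    rw [map_mul, ← e, ← e', mul_mul_mul_comm]
    exact hab.mul_right _
  rcases hp.dvd_or_dvd (ζ_dvd_of_prime w hp hps h1) with h | h
  · left
    rw [← (ζ_unit w hs).dvd_mul_right, e]
    exact map_dvd _ h
  · right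
    rw [← (ζ_unit w hs').dvd_mul_right, e']
    exact map_dvd _ h

/-- The degree `γ` part of the localized ring. -/
def ζM (γ : Γ) : AddSubgroup (ZLoc w) where
  carrier := {a | ∃ r, IsWeightedHomogeneous w r γ ∧ ∃ s ∈ zeroSet w,
    a * algebraMap (MvPolynomial σ ℚ) (ZLoc w) s = algebraMap (MvPolynomial σ ℚ) (ZLoc w) r}
  zero_mem' := ⟨0, isWeightedHomogeneous_zero _ _ _, 1, Submonoid.one_mem _, by simp⟩
  add_mem' := by
    rintro a b ⟨r, hr, s, hs, e⟩ ⟨r', hr', s', hs', e'⟩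
    refine ⟨r * s' + r' * s, ?_, s * s', Submonoid.mul_mem _ hs hs', ?_⟩
    · have h1 := hr.mul (zeroSet_homog w hs')
      have h2 := hr'.mul (zeroSet_homog w hs)
      rw [add_zero] at h1 h2
      exact h1.add h2
    · rw [map_add, map_mul, map_mul, map_mul, ← e, ← e']; ring
  neg_mem' := by
    rintro a ⟨r, hr, s, hs, e⟩
    exact ⟨-r, hr.neg, s, hs, by rw [map_neg, ← e]; ring⟩

theorem ζM_map {r : MvPolynomial σ ℚ} {γ : Γ} (h : IsWeightedHomogeneous w r γ) :
    algebraMap (MvPolynomial σ ℚ) (ZLoc w) r ∈ ζM w γ :=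
  ⟨r, h, 1, Submonoid.one_mem _, by simp⟩

theorem ζM_mul {γ δ : Γ} {a b : ZLoc w} (ha : a ∈ ζM w γ) (hb : b ∈ ζM w δ) :
    a * b ∈ ζM w (γ + δ) := by
  obtain ⟨r, hr, s, hs, e⟩ := ha
  obtain ⟨r', hr', s', hs', e'⟩ := hb
  exact ⟨r * r', hr.mul hr', s * s', Submonoid.mul_mem _ hs hs', by
    rw [map_mul, map_mul, ← e, ← e']; ring⟩

theorem ζM_unique {γ δ : Γ} {a : ZLoc w} (h0 : a ≠ 0) (ha : a ∈ ζM w γ) (hb : a ∈ ζM w δ) :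
    γ = δ := by
  obtain ⟨r, hr, s, hs, e⟩ := ha
  obtain ⟨r', hr', s', hs', e'⟩ := hb
  have h1 : r * s' = r' * s := by
    apply ζ_inj w
    rw [map_mul, map_mul, ← e, ← e']; ring
  have h2 := hr.mul (zeroSet_homog w hs')
  have h3 := hr'.mul (zeroSet_homog w hs)
  rw [add_zero] at h2 h3
  rw [← h1] at h3
  have h4 : r * s' ≠ 0 := by
    refine mul_ne_zero (fun h => ?_) hs'.1
    rw [h, map_zero] at e
    exact mul_ne_zero h0 (ζ_unit w hs).ne_zero e
  exact IsWeightedHomogeneous.inj_right h4 h2 h3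

theorem ζM_div [TwoUniqueSums Γ] {γ δ : Γ} {a b : ZLoc w} (ha : a ∈ ζM w γ) (h0 : a ≠ 0)
    (hab : a * b ∈ ζM w δ) : b ∈ ζM w (δ - γ) := by
  by_cases hb0 : b = 0
  · rw [hb0]; exact AddSubgroup.zero_mem _
  obtain ⟨r, hr, s, hs, e⟩ := ha
  obtain ⟨k, t, ht, e'⟩ := ζ_frac w b
  obtain ⟨q, hq, v, hv, e''⟩ := hab
  have h1 : r * (k * v) = q * (s * t) := by
    apply ζ_inj w
    simp only [map_mul]
    rw [← e, ← e', ← e'']; ring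
  have hr0 : r ≠ 0 := fun h => by
    rw [h, map_zero] at e
    exact mul_ne_zero h0 (ζ_unit w hs).ne_zero e
  have hk0 : k ≠ 0 := fun h => by
    rw [h, map_zero] at e'
    exact mul_ne_zero hb0 (ζ_unit w ht).ne_zero e'
  have h2 : IsWeightedHomogeneous w (r * (k * v)) δ := by
    rw [h1]
    have := hq.mul ((zeroSet_homog w hs).mul (zeroSet_homog w ht))
    rwa [add_zero, add_zero] at this
  obtain ⟨γ', h3, h4⟩ := homog_of_mul w (mul_ne_zero hr0 (mul_ne_zero hk0 hv.1)) h2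
  rw [IsWeightedHomogeneous.inj_right hr0 h3 hr] at h4
  obtain ⟨κ, h5, h6⟩ := homog_of_mul w (mul_ne_zero hk0 hv.1) h4
  have h7 := IsWeightedHomogeneous.inj_right hv.1 h6 (zeroSet_homog w hv)
  rw [sub_eq_zero] at h7
  rw [← h7] at h5
  exact ⟨k, h5, t, ht, e'⟩

theorem ζM_unit {u : ZLoc w} (hu : IsUnit u) : u ∈ ζM w 0 := by
  obtain ⟨r, s, hs, e⟩ := ζ_frac w u
  refine ⟨r, zeroSet_homog w (ζ_unit_mem w ?_), s, hs, e⟩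
  rw [← e]
  exact hu.mul (ζ_unit w hs)

theorem ζ_factor [TwoUniqueSums Γ] (r : MvPolynomial σ ℚ) (h0 : r ≠ 0) (δ : Γ)
    (h : IsWeightedHomogeneous w r δ) :
    ∃ m : Multiset (ZLoc w), (∀ p ∈ m, Prime p ∧ ∃ γ, p ∈ ζM w γ) ∧
    Associated m.prod (algebraMap (MvPolynomial σ ℚ) (ZLoc w) r) := by
  induction r using UniqueFactorizationMonoid.induction_on_prime generalizing δ with
  | h₁ => exact absurd rfl h0
  | h₂ u hu =>
    refine ⟨0, by simp, ?_⟩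
    rw [Multiset.prod_zero]
    exact (associated_one_iff_isUnit.mpr (hu.map _)).symm
  | h₃ a p ha hp ih =>
    obtain ⟨γ, h1, h2⟩ := homog_of_mul w h0 h
    obtain ⟨m, hm, hm2⟩ := ih ha _ h2
    by_cases hps : p ∈ zeroSet w
    · refine ⟨m, hm, hm2.trans ?_⟩
      rw [map_mul]
      exact (associated_unit_mul_left _ _ (ζ_unit w hps)).symm
    · refine ⟨algebraMap _ _ p ::ₘ m, ?_, ?_⟩
      · intro q hq
        rcases Multiset.mem_cons.mp hq with rfl | hq
        · exact ⟨ζ_prime w hp hps, γ, ζM_map w h1⟩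
        · exact hm q hq
      · rw [Multiset.prod_cons, map_mul]
        exact hm2.mul_left _

end Homog

section Concrete

open MvPolynomial

variable (Γ : Type) [AddCommGroup Γ] [TwoUniqueSums Γ]

/-- The weight function. -/
def wt : Γ × ℕ → Γ := Prod.fst

theorem wt_strong (γ : Γ) : ∃ q₁ ∈ ζM (wt Γ) (-γ), ∃ q₂ ∈ ζM (wt Γ) (-γ), ∃ h₁ ∈ ζM (wt Γ) γ,
    ∃ h₂ ∈ ζM (wt Γ) γ, q₁ * h₁ + q₂ * h₂ = 1 := by
  classical
  have hX : ∀ (δ : Γ) (n : ℕ), IsWeightedHomogeneous (wt Γ)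
      (X (δ, n) : MvPolynomial (Γ × ℕ) ℚ) δ := fun δ n => isWeightedHomogeneous_X ℚ (wt Γ) (δ, n)
  have hirr : Irreducible ((X (-γ, 0) : MvPolynomial (Γ × ℕ) ℚ) * X (γ, 2) + X (-γ, 1) * X (γ, 3)) := by
    refine irreducible_mul_X_add _ _ _ (X_ne_zero _) ?_ ?_ ?_
    · rw [vars_X]; simp
    · intro h
      have := vars_mul _ _ h
      rw [vars_X, vars_X] at this
      simp at this
    · rw [(X_prime (R := ℚ) (i := ((-γ, 0) : Γ × ℕ))).irreducible.isRelPrime_iff_not_dvd]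
      intro h
      rcases X_prime.dvd_or_dvd h with h | h
      · rw [X_dvd_X] at h; simp at h
      · rw [X_dvd_X] at h; simp at h
  have hhom : IsWeightedHomogeneous (wt Γ)
      ((X (-γ, 0) : MvPolynomial (Γ × ℕ) ℚ) * X (γ, 2) + X (-γ, 1) * X (γ, 3)) 0 := by
    have h1 := (hX (-γ) 0).mul (hX γ 2)
    have h2 := (hX (-γ) 1).mul (hX γ 3)
    rw [neg_add_cancel] at h1 h2
    exact h1.add h2
  have hs := prime_mem_zeroSet (wt Γ) hirr.prime hhom
  obtain ⟨v, hv⟩ := (ζ_unit (wt Γ) hs).exists_right_inv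
  rw [map_add, map_mul, map_mul] at hv
  have hv0 : v ∈ ζM (wt Γ) 0 := by
    refine ⟨1, isWeightedHomogeneous_one _ _, _, hs, ?_⟩
    rw [map_add, map_mul, map_mul, map_one, mul_comm, hv]
  refine ⟨_, ζM_map _ (hX (-γ) 0), _, ζM_map _ (hX (-γ) 1),
    algebraMap (MvPolynomial (Γ × ℕ) ℚ) _ (X (γ, 2)) * v, ?_, algebraMap (MvPolynomial (Γ × ℕ) ℚ) _ (X (γ, 3)) * v, ?_, ?_⟩
  · have := ζM_mul _ (ζM_map _ (hX γ 2)) hv0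
    rwa [add_zero] at this
  · have := ζM_mul _ (ζM_map _ (hX γ 3)) hv0
    rwa [add_zero] at this
  · rw [← hv]; ring

theorem wt_avoid (a : ZLoc (wt Γ)) (ha : a ∈ ζM (wt Γ) 0) (b : ZLoc (wt Γ)) (hb : b ∈ ζM (wt Γ) 0)
    (ha0 : a ≠ 0) (hb0 : b ≠ 0) (hab : ∀ p, Prime p → p ∣ a → ¬ p ∣ b) :
    ∃ t ∈ ζM (wt Γ) 0, IsUnit (a + t * b) := by
  classical
  obtain ⟨r, hr, s, hs, e⟩ := ha
  obtain ⟨r', hr', s', hs', e'⟩ := hb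
  have hr0 : r ≠ 0 := fun h => by
    rw [h, map_zero] at e
    exact mul_ne_zero ha0 (ζ_unit _ hs).ne_zero e
  have hr0' : r' ≠ 0 := fun h => by
    rw [h, map_zero] at e'
    exact mul_ne_zero hb0 (ζ_unit _ hs').ne_zero e'
  obtain ⟨x, y, c, hxy, rfl, rfl⟩ := UniqueFactorizationMonoid.exists_reduced_factors r hr0 r'
  have hc0 : c ≠ 0 := left_ne_zero_of_mul hr0
  have hy0 : y ≠ 0 := right_ne_zero_of_mul hr0'
  have hc : c ∈ zeroSet (wt Γ) := by
    refine ⟨hc0, fun p hp hpc => ?_⟩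
    by_contra hp0
    have hps : p ∉ zeroSet (wt Γ) := fun h => hp0 (zeroSet_homog _ h)
    refine hab _ (ζ_prime _ hp hps) ?_ ?_
    · rw [← (ζ_unit _ hs).dvd_mul_right, e]
      exact map_dvd _ (hpc.mul_right _)
    · rw [← (ζ_unit _ hs').dvd_mul_right, e']
      exact map_dvd _ (hpc.mul_right _)
  have hx : IsWeightedHomogeneous (wt Γ) x 0 := by
    obtain ⟨γ, h1, h2⟩ := homog_of_mul _ hr0 hr
    rwa [← IsWeightedHomogeneous.inj_right hc0 (zeroSet_homog _ hc) h1, sub_zero] at h2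
  have hy : IsWeightedHomogeneous (wt Γ) y 0 := by
    obtain ⟨γ, h1, h2⟩ := homog_of_mul _ hr0' hr'
    rwa [← IsWeightedHomogeneous.inj_right hc0 (zeroSet_homog _ hc) h1, sub_zero] at h2
  obtain ⟨n, hn⟩ := Infinite.exists_notMem_finset ((x.vars ∪ y.vars).image Prod.snd)
  have hn2 : ((0, n) : Γ × ℕ) ∉ x.vars ∪ y.vars := fun h =>
    hn (Finset.mem_image_of_mem Prod.snd h)
  rw [Finset.mem_union, not_or] at hn2
  have hX : IsWeightedHomogeneous (wt Γ) (X (0, n) : MvPolynomial (Γ × ℕ) ℚ) 0 :=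
    isWeightedHomogeneous_X ℚ (wt Γ) (0, n)
  have hirr : Irreducible (y * X (0, n) + x) :=
    irreducible_mul_X_add _ _ _ hy0 hn2.2 hn2.1 hxy.symm
  have hhom : IsWeightedHomogeneous (wt Γ) (y * X (0, n) + x) 0 := by
    have := hy.mul hX
    rw [add_zero] at this
    exact this.add hx
  have hu := prime_mem_zeroSet (wt Γ) hirr.prime hhom
  obtain ⟨v, hv⟩ := (ζ_unit (wt Γ) hs).exists_right_inv
  refine ⟨algebraMap _ _ (s' * X (0, n)) * v, ⟨s' * X (0, n), ?_, s, hs, ?_⟩, ?_⟩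
  · have := (zeroSet_homog _ hs').mul hX
    rwa [add_zero] at this
  · rw [mul_assoc, mul_comm v, hv, mul_one]
  · have h1 := (ζ_unit (wt Γ) hc).mul (ζ_unit (wt Γ) hu)
    refine isUnit_of_mul_isUnit_left (y := algebraMap (MvPolynomial (Γ × ℕ) ℚ) (ZLoc (wt Γ)) s) ?_
    convert h1 using 1
    rw [← map_mul, mul_add, ← mul_assoc, map_add, ← e, map_mul _ (c * y), ← e', map_mul]
    linear_combination (algebraMap (MvPolynomial (Γ × ℕ) ℚ) (ZLoc (wt Γ)) s') *
      (algebraMap (MvPolynomial (Γ × ℕ) ℚ) (ZLoc (wt Γ)) (X (0, n))) * b * hv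

/-- The concrete graded ring. -/
def wtData : GData Γ (ZLoc (wt Γ)) where
  M := ζM (wt Γ)
  one_mem := ζM_unit _ isUnit_one
  mul_mem := ζM_mul _
  div_mem := ζM_div _
  strong := wt_strong Γ
  factor := by
    rintro a ⟨r, hr, s, hs, e⟩ h0
    have hr0 : r ≠ 0 := fun h => by
      rw [h, map_zero] at e
      exact mul_ne_zero h0 (ζ_unit _ hs).ne_zero e
    obtain ⟨m, hm, h⟩ := ζ_factor (wt Γ) r hr0 0 hr
    refine ⟨m, hm, h.trans ?_⟩
    rw [← e]
    exact associated_mul_unit_left _ _ (ζ_unit _ hs)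
  unit_mem := ζM_unit _
  deg_unique := ζM_unique _
  avoid := wt_avoid Γ
  primes := by
    intro γ hγ
    have hX : ∀ (n : ℕ), IsWeightedHomogeneous (wt Γ)
      (X (γ, n) : MvPolynomial (Γ × ℕ) ℚ) γ := fun n => isWeightedHomogeneous_X ℚ (wt Γ) (γ, n)
    have hS : ∀ n, (X (γ, n) : MvPolynomial (Γ × ℕ) ℚ) ∉ zeroSet (wt Γ) := fun n h =>
      hγ (IsWeightedHomogeneous.inj_right (X_ne_zero _) (hX n) (zeroSet_homog _ h))
    refine ⟨fun n => algebraMap (MvPolynomial (Γ × ℕ) ℚ) _ (X (γ, n)), fun n => ⟨ζ_prime _ X_prime (hS n), ζM_map _ (hX n)⟩, ?_⟩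
    intro n m h
    have := ζ_dvd_of_prime _ X_prime (hS n) h.dvd
    rw [X_dvd_X] at this
    exact congrArg Prod.snd this

end Concrete

theorem exists_free (Γ : Type) [AddCommGroup Γ] [TwoUniqueSums Γ] :
    ∃ (D : Type) (_ : CommRing D) (_ : IsDedekindDomain D)
      (e : Multiplicative Γ ≃* ClassGroup D), ∀ γ ≠ 0,
        (primesIn D (e (Multiplicative.ofAdd γ))).Infinite := by
  obtain ⟨h, e, he⟩ := (wtData Γ).main
  exact ⟨(wtData Γ).B, inferInstance, h, e, he⟩

theorem exists_loc_hom (D : Type) [CommRing D] [IsDedekindDomain D] (A : Type) [AddCommGroup A]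
    (φ : ClassGroup D →* Multiplicative A) (hφ : Function.Surjective φ)
    (h1 : ∀ g, φ g = 1 → g ≠ 1 → (primesIn D g).Nonempty)
    (h2 : ∀ g, ∃ h, φ h = 1 ∧ (primesIn D (g * h)).Infinite) :
    ∃ (S : Submonoid D) (_ : S ≤ nonZeroDivisors D) (_ : IsDedekindDomain (Localization S)),
      Nonempty (Additive (ClassGroup (Localization S)) ≃+ A) ∧
        ∀ g, (primesIn (Localization S) g).Infinite := by
  obtain ⟨S, hS, hD, ⟨e⟩, h⟩ := exists_loc D φ.ker (fun g hg => h1 g hg) h2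
  refine ⟨S, hS, hD, ⟨?_⟩, h⟩
  let e2 := e.trans (QuotientGroup.quotientKerEquivOfSurjective φ hφ)
  exact MulEquiv.toAdditiveLeft e2

theorem exists_all (A : Type) [AddCommGroup A] :
    ∃ (D : Type) (_ : CommRing D) (_ : IsDedekindDomain D),
      Nonempty (Additive (ClassGroup D) ≃+ A) ∧ ∀ g, (primesIn D g).Infinite := by
  obtain ⟨D, _, _, e, he⟩ := exists_free (A →₀ ℤ)
  let π : (A →₀ ℤ) →+ A := Finsupp.liftAddHom fun a => (zmultiplesHom A a)
  have hπ : ∀ a, π (Finsupp.single a 1) = a := fun a => by simp [π]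
  let φ : ClassGroup D →* Multiplicative A := (AddMonoidHom.toMultiplicative π).comp e.symm.toMonoidHom
  have hφ : ∀ γ, φ (e (Multiplicative.ofAdd γ)) = Multiplicative.ofAdd (π γ) := fun γ => by
    simp [φ]
  have hne : ∀ g, g ≠ 1 → (primesIn D g).Infinite := by
    intro g hg
    have := he (Multiplicative.toAdd (e.symm g)) (fun h => hg ?_)
    · rwa [ofAdd_toAdd, e.apply_symm_apply] at this
    · rw [← e.apply_symm_apply g, ← ofAdd_toAdd (e.symm g), h, ofAdd_zero, map_one]
  obtain ⟨S, hS, hD, h1, h2⟩ := exists_loc_hom D A φ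
    (fun a => ⟨e (Multiplicative.ofAdd (Finsupp.single (Multiplicative.toAdd a) 1)), by
      rw [hφ, hπ]; rfl⟩)
    (fun g _ hg => (hne g hg).nonempty) (fun g => by
      by_cases hg : g = 1
      · refine ⟨e (Multiplicative.ofAdd (Finsupp.single 0 1)), by rw [hφ, hπ]; rfl, ?_⟩
        rw [hg, one_mul]
        exact he _ (by simp)
      · exact ⟨1, map_one _, by rw [mul_one]; exact hne g hg⟩)
  exact ⟨Localization S, inferInstance, hD, h1, h2⟩

/-- **Theorem B.** Given a family `(G i)_{i ∈ ℕ}` of finitely generated abelian groups,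
there is a Dedekind domain `D` (not a field) such that:
(1) `Cl(D) ≅ ⨁_{i ∈ ℕ} G i`;
(2) for each `i` there is a submonoid `Sᵢ ⊆ D \ {0}` with `Cl(D_{Sᵢ}) ≅ G i`
    (the localization again being a Dedekind domain);
(3) every class of `Cl(D)`, and every class of each `Cl(D_{Sᵢ})`, contains infinitely many
    nonzero prime ideals. -/
theorem dedekind_realization_of_fg_family (G : ℕ → Type) [∀ i, AddCommGroup (G i)]
    [∀ i, AddGroup.FG (G i)] :
    ∃ (D : Type) (_ : CommRing D) (_ : IsDedekindDomain D),
      ¬ IsField D ∧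
      Nonempty (Additive (ClassGroup D) ≃+ ⨁ i, G i) ∧
      (∀ g : ClassGroup D,
        { P : (Ideal D)⁰ | (P : Ideal D).IsPrime ∧ ClassGroup.mk0 P = g }.Infinite) ∧
      (∀ i : ℕ, ∃ (S : Submonoid D) (_ : S ≤ nonZeroDivisors D)
          (_ : IsDedekindDomain (Localization S)),
        Nonempty (Additive (ClassGroup (Localization S)) ≃+ G i) ∧
        ∀ g : ClassGroup (Localization S),
          { P : (Ideal (Localization S))⁰ |
            (P : Ideal (Localization S)).IsPrime ∧ ClassGroup.mk0 P = g }.Infinite) := by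
  obtain ⟨D, _, _, ⟨e⟩, hinf⟩ := exists_all (⨁ i, G i)
  refine ⟨D, inferInstance, inferInstance, ?_, ⟨e⟩, hinf, ?_⟩
  · intro hF
    obtain ⟨P, hP, -⟩ := (hinf 1).nonempty
    have hP0 : (P : Ideal D) ≠ ⊥ := nonZeroDivisors.ne_zero P.2
    letI := hF.toField
    rcases (Ideal.eq_bot_or_top (P : Ideal D)) with h | h
    · exact hP0 h
    · exact hP.ne_top h
  · intro i
    let ψ : Additive (ClassGroup D) →+ G i :=
      (DFinsupp.evalAddMonoidHom (β := G) i).comp e.toAddMonoidHom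
    have hψ : Function.Surjective ψ := by
      intro x
      refine ⟨e.symm (DirectSum.of G i x), ?_⟩
      have : ψ (e.symm (DirectSum.of G i x)) = (DirectSum.of G i x) i := by
        simp only [ψ, AddMonoidHom.comp_apply]
        change (e (e.symm (DirectSum.of G i x))) i = _
        rw [e.apply_symm_apply]
      rw [this, DirectSum.of_eq_same]
    let φ : ClassGroup D →* Multiplicative (G i) := AddMonoidHom.toMultiplicativeRight ψ
    exact exists_loc_hom D (G i) φ hψ (fun g _ _ => (hinf g).nonempty)
      (fun g => ⟨1, map_one _, by rw [mul_one]; exact hinf g⟩)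
end

section
/- Let G be a countably generated abelian group of finite exponent, i.e., there is n ≥ 1 with n·g = 0 for all g ∈ G. Then there exists a Dedekind domain D that is not a field such that Cl(D) is isomorphic to G and every class of Cl(D) contains infinitely many nonzero prime ideals of D. -/
open scoped nonZeroDivisors

namespace DedReal
open MvPolynomial

set_option linter.unusedSectionVars false

variable {G : Type} [AddCommGroup G]

/-- The polynomial ring with countably many variables in each degree `g : G`. -/
abbrev B (G : Type) := MvPolynomial (G × ℕ) ℚ

/-- Homogeneity for the `G`-grading. -/
abbrev Hom (f : B G) (g : G) : Prop := IsWeightedHomogeneous (Prod.fst : G × ℕ → G) f g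

noncomputable abbrev cmp (g : G) (f : B G) : B G :=
  weightedHomogeneousComponent (Prod.fst : G × ℕ → G) g f

theorem cmp_mul {f : B G} {a : G} (hf : Hom f a) (c : B G) (m : G) :
    cmp (a + m) (f * c) = f * cmp m c := by
  classical
  let := weightedGradedAlgebra ℚ (Prod.fst : G × ℕ → G)
  have h := DirectSum.coe_decompose_mul_add_of_left_mem
    (weightedHomogeneousSubmodule ℚ (Prod.fst : G × ℕ → G)) (i := a) (j := m) (a := f) (b := c)
    ((mem_weightedHomogeneousSubmodule _ _ _ _).2 hf)
  have key : ∀ (x : B G) (n : G), ((DirectSum.decompose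
      (weightedHomogeneousSubmodule ℚ (Prod.fst : G × ℕ → G)) x n : _) : B G) = cmp n x :=
    fun x n => MvPolynomial.decompose'_apply ℚ _ x n
  rw [key, key] at h
  exact h

theorem prime_X (v : G × ℕ) : Prime (X v : B G) := MvPolynomial.X_prime

theorem exists_cmp_ne {f : B G} (hf : f ≠ 0) : ∃ m, cmp m f ≠ 0 := by
  by_contra! h
  apply hf
  rw [← finsum_weightedHomogeneousComponent (Prod.fst : G × ℕ → G) f]
  simp [h]

/-- left cancellation of homogeneous elements -/
theorem hom_of_mul {p q : B G} {a c : G} (hp0 : p ≠ 0) (hp : Hom p a) (hpq : Hom (p * q) c) :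
    Hom q (c - a) := by
  classical
  have key : ∀ m, m ≠ c - a → cmp m q = 0 := by
    intro m hm
    have h1 := cmp_mul hp q m
    have h2 : cmp (a + m) (p * q) = 0 :=
      hpq.weightedHomogeneousComponent_ne _ (by
        intro h; apply hm; rw [← h]; abel)
    rw [h2] at h1
    exact (mul_eq_zero.1 h1.symm).resolve_left hp0
  have : q = cmp (c - a) q := by
    conv_lhs => rw [← finsum_weightedHomogeneousComponent (Prod.fst : G × ℕ → G) q]
    exact finsum_eq_single _ _ key
  rw [this]
  exact weightedHomogeneousComponent_isWeightedHomogeneous _ _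

theorem hom_unit {u : B G} (hu : IsUnit u) : Hom u 0 := by
  obtain ⟨r, hr, rfl⟩ := MvPolynomial.isUnit_iff_eq_C_of_isReduced.1 hu
  exact isWeightedHomogeneous_C _ _

theorem hom_assoc {p q : B G} {a : G} (h : Associated p q) (hp : Hom p a) : Hom q a := by
  obtain ⟨u, rfl⟩ := h
  simpa using hp.mul (hom_unit u.isUnit)

theorem totalDegree_cmp_le (m : G) (f : B G) : (cmp m f).totalDegree ≤ f.totalDegree := by
  classical
  apply totalDegree_le_of_support_subset
  rw [support_weightedHomogeneousComponent]
  exact Finset.filter_subset _ _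

/-- a nonzero polynomial dividing all its components is homogeneous -/
theorem hom_of_dvd_cmp {f : B G} (hf : f ≠ 0) (h : ∀ m, f ∣ cmp m f) : ∃ m, Hom f m := by
  obtain ⟨m, hm⟩ := exists_cmp_ne hf
  obtain ⟨c, hc⟩ := h m
  have hc0 : c ≠ 0 := by rintro rfl; simp [hc] at hm
  have hdeg := totalDegree_cmp_le m f
  rw [hc, totalDegree_mul_of_isDomain hf hc0] at hdeg
  have hcd : c.totalDegree = 0 := by omega
  rw [totalDegree_eq_zero_iff_eq_C] at hcd
  have hcu : IsUnit c := by
    rw [hcd]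
    refine (IsUnit.mk0 _ ?_).map C
    intro h0; rw [h0] at hcd; simp at hcd; exact hc0 hcd
  refine ⟨m, hom_assoc (p := cmp m f) ?_ (weightedHomogeneousComponent_isWeightedHomogeneous _ _)⟩
  rw [hc]
  exact (associated_mul_unit_right f c hcu).symm

theorem exists_gcd {f f' : B G} {a b : G} (hf0 : f ≠ 0) (hf0' : f' ≠ 0)
    (hf : Hom f a) (hf' : Hom f' b) :
    ∃ (d p q : B G) (e : G), d ≠ 0 ∧ Hom d e ∧ Hom p (a - e) ∧ Hom q (b - e) ∧
      f = d * p ∧ f' = d * q ∧ IsRelPrime p q := by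
  classical
  let : GCDMonoid (B G) := UniqueFactorizationMonoid.toGCDMonoid _
  obtain ⟨p, q, hp, hq, hu⟩ := extract_gcd f f'
  have hl0 : lcm f f' ≠ 0 := by
    intro h; rw [lcm_eq_zero_iff] at h; tauto
  have hd0 : gcd f f' ≠ 0 := by
    intro h; rw [gcd_eq_zero_iff] at h; tauto
  obtain ⟨l, hl⟩ : ∃ l, Hom (lcm f f') l := by
    apply hom_of_dvd_cmp hl0
    intro m
    apply lcm_dvd
    · obtain ⟨c, hc⟩ := dvd_lcm_left f f'
      have := cmp_mul hf c (m - a)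
      rw [add_sub_cancel] at this
      rw [hc, this]; exact dvd_mul_right _ _
    · obtain ⟨c, hc⟩ := dvd_lcm_right f f'
      have := cmp_mul hf' c (m - b)
      rw [add_sub_cancel] at this
      rw [hc, this]; exact dvd_mul_right _ _
  have hd : Hom (gcd f f') (a + b - l) := by
    apply hom_of_mul hl0 hl
    rw [mul_comm]
    exact hom_assoc (gcd_mul_lcm f f').symm (hf.mul hf')
  refine ⟨gcd f f', p, q, _, hd0, hd, hom_of_mul hd0 hd (hp ▸ hf), hom_of_mul hd0 hd (hq ▸ hf'),
    hp, hq, ?_⟩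
  intro z hz1 hz2
  exact isUnit_of_dvd_unit (dvd_gcd hz1 hz2) hu

/-- The set of elements to be inverted. -/
structure InS (s : B G) : Prop where
  ne : s ≠ 0
  hom : Hom s 0
  deg : ∀ d g, d ∣ s → Hom d g → g = 0
  nvar : ∀ v, ¬ (X v : B G) ∣ s

theorem InS.one : InS (1 : B G) where
  ne := one_ne_zero
  hom := isWeightedHomogeneous_one _ _
  deg _ _ hd hg := IsWeightedHomogeneous.inj_right (isUnit_of_dvd_one hd).ne_zero hg
    (hom_unit (isUnit_of_dvd_one hd))
  nvar v h := (prime_X v).not_isUnit (isUnit_of_dvd_one h)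

theorem InS.mul {s t : B G} (hs : InS s) (ht : InS t) : InS (s * t) where
  ne := mul_ne_zero hs.ne ht.ne
  hom := by simpa using hs.hom.mul ht.hom
  deg d g hd hg := by
    have hd0 : d ≠ 0 := ne_zero_of_dvd_ne_zero (mul_ne_zero hs.ne ht.ne) hd
    obtain ⟨c, p, q, e, hc0, hc, hp, hq, h1, h2, h3⟩ := exists_gcd hd0 hs.ne hg hs.hom
    have he : e = 0 := hs.deg c e ⟨q, h2⟩ hc
    rw [h1, h2, mul_assoc] at hd
    have := h3.dvd_of_dvd_mul_left ((mul_dvd_mul_iff_left hc0).1 hd)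
    have := ht.deg _ _ this hp
    rw [he] at this; simpa using this
  nvar v h := ((prime_X v).dvd_or_dvd h).elim (hs.nvar v) (ht.nvar v)

theorem not_X_dvd {v : G × ℕ} {f : B G} (hf : f ≠ 0) (h : v ∉ f.vars) : ¬ (X v : B G) ∣ f := by
  classical
  rintro ⟨c, rfl⟩
  apply h
  have hc : c ≠ 0 := by rintro rfl; simp at hf
  rw [mem_vars_iff_mem_support]
  obtain ⟨d, hd⟩ := support_nonempty.2 hc
  refine ⟨Finsupp.single v 1 + d, ?_, by simp⟩
  rw [mem_support_iff, coeff_X_mul]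
  exact mem_support_iff.1 hd

theorem hom_X (v : G × ℕ) : Hom (X v : B G) v.1 := isWeightedHomogeneous_X _ _ _

theorem exists_comb {f f' : B G} {a b : G} (hf0 : f ≠ 0) (hf0' : f' ≠ 0)
    (hf : Hom f a) (hf' : Hom f' b) (h : IsRelPrime f f') :
    ∃ q r : B G, Hom q (-a) ∧ Hom r (-b) ∧ InS (f * q + f' * r) := by
  classical
  obtain ⟨N, hN⟩ : ∃ N : ℕ, ∀ v ∈ f.vars ∪ f'.vars, v.2 < N := by
    refine ⟨(f.vars ∪ f'.vars).sup Prod.snd + 1, fun v hv => Nat.lt_succ_of_le ?_⟩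
    exact Finset.le_sup (f := Prod.snd) hv
  have fresh : ∀ c n, N ≤ n → (c, n) ∉ f.vars ∧ (c, n) ∉ f'.vars := by
    intro c n hn
    constructor <;> intro h <;>
    [have := hN (c, n) (Finset.mem_union_left _ h); have := hN (c, n) (Finset.mem_union_right _ h)] <;>
    simp at this <;> omega
  set x : G × ℕ := (-a, N) with hx
  set y : G × ℕ := (-b, N + 1) with hy
  have hxy : x ≠ y := by simp [hx, hy]
  obtain ⟨hxf, hxf'⟩ := fresh (-a) N le_rfl
  obtain ⟨hyf, hyf'⟩ := fresh (-b) (N+1) (by omega)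
  have hXY : ∀ u v : G × ℕ, u ≠ v → ¬ (X u : B G) ∣ X v := fun u v huv =>
    not_X_dvd (X_ne_zero _) (by simpa [vars_X] using huv)
  have hirr : Irreducible (f * X x + f' * X y) := by
    apply irreducible_mul_X_add _ _ _ hf0 hxf
    · intro hm
      rcases Finset.mem_union.1 (vars_mul _ _ hm) with h | h
      · exact hxf' h
      · simp [vars_X] at h; exact hxy h
    · refine h.mul_right ?_
      apply IsRelPrime.symm
      exact ((prime_X y).irreducible.isRelPrime_iff_not_dvd).2 (not_X_dvd hf0 hyf)
  have hhom : Hom (f * X x + f' * X y) 0 := by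
    apply IsWeightedHomogeneous.add
    · simpa [hx] using hf.mul (hom_X x)
    · simpa [hy] using hf'.mul (hom_X y)
  refine ⟨X x, X y, hom_X x, hom_X y, hirr.ne_zero, hhom, ?_, ?_⟩
  · intro d g hd hg
    have hd0 : d ≠ 0 := ne_zero_of_dvd_ne_zero hirr.ne_zero hd
    rcases (hirr.dvd_iff).1 hd with h | h
    · exact IsWeightedHomogeneous.inj_right hd0 hg (hom_unit h)
    · exact IsWeightedHomogeneous.inj_right hd0 hg (hom_assoc h hhom)
  · intro v hv
    by_cases hvx : v = x
    · rw [hvx] at hv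
      have := (dvd_add_right (dvd_mul_left (X x : B G) f)).1 hv
      rcases (prime_X x).dvd_or_dvd this with h | h
      · exact not_X_dvd hf0' hxf' h
      · exact hXY _ _ hxy h
    by_cases hvy : v = y
    · rw [hvy] at hv
      have := (dvd_add_left (dvd_mul_left (X y : B G) f')).1 hv
      rcases (prime_X y).dvd_or_dvd this with h | h
      · exact not_X_dvd hf0 hyf h
      · exact hXY _ _ hxy.symm h
    have hass := (prime_X v).irreducible.associated_of_dvd hirr hv
    obtain ⟨c, hc⟩ := hass.symm.dvd
    let φ : B G →ₐ[ℚ] B G := aeval (fun z => if z = x ∨ z = y then 0 else X z)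
    have := congrArg φ hc
    simp [φ, hvx, hvy] at this
    


/-- degree zero part -/
def B0 (G : Type) [AddCommGroup G] : Subring (B G) where
  carrier := {f | Hom f 0}
  mul_mem' ha hb := by simpa using IsWeightedHomogeneous.mul ha hb
  one_mem' := isWeightedHomogeneous_one _ _
  add_mem' ha hb := IsWeightedHomogeneous.add ha hb
  zero_mem' := isWeightedHomogeneous_zero _ _ _
  neg_mem' ha := IsWeightedHomogeneous.neg ha

/-- the multiplicative set -/
def S0 (G : Type) [AddCommGroup G] : Submonoid (B0 G) where
  carrier := {s | InS (s : B G)}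
  mul_mem' ha hb := InS.mul ha hb
  one_mem' := InS.one

theorem S0_le : S0 G ≤ (B0 G)⁰ := by
  intro s hs
  rw [mem_nonZeroDivisors_iff_ne_zero]
  rintro rfl
  exact InS.ne hs rfl

/-- the Dedekind domain -/
abbrev D (G : Type) [AddCommGroup G] := Localization (S0 G)

instance : IsDomain (D G) := IsLocalization.isDomain_localization S0_le

/-- The map from the degree zero part. -/
noncomputable abbrev ι : B0 G →+* D G := algebraMap (B0 G) (D G)

theorem ι_inj : Function.Injective (ι (G := G)) := IsLocalization.injective _ S0_le

theorem isUnit_ι {s : B0 G} (hs : InS (s : B G)) : IsUnit (ι s) :=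
  IsLocalization.map_units (D G) (⟨s, hs⟩ : S0 G)

theorem exists_rep (x : D G) : ∃ (a s : B0 G), InS (s : B G) ∧ x * ι s = ι a := by
  obtain ⟨⟨a, s⟩, h⟩ := IsLocalization.surj (S0 G) x
  exact ⟨a, s, s.2, h⟩

theorem mem_iff_of_rep {I : Ideal (D G)} {x : D G} {a s : B0 G} (hs : InS (s : B G))
    (h : x * ι s = ι a) : x ∈ I ↔ ι a ∈ I := by
  rw [← h, mul_comm, Ideal.unit_mul_mem_iff_mem _ (isUnit_ι hs)]

/-- The ideal attached to a homogeneous element. -/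
noncomputable def Id (h : B G) : Ideal (D G) :=
  ((Ideal.span {h}).comap (B0 G).subtype).map (algebraMap (B0 G) (D G))

theorem mem_Id {h : B G} {a : B0 G} : ι a ∈ Id h ↔ ∃ s : B0 G, InS (s : B G) ∧ h ∣ (s * a : B G) := by
  unfold Id
  rw [IsLocalization.algebraMap_mem_map_algebraMap_iff (S0 G)]
  simp [Ideal.mem_span_singleton, S0]

theorem mem_Id_of_dvd {h : B G} {a : B0 G} (hd : h ∣ (a : B G)) : ι a ∈ Id h :=
  mem_Id.2 ⟨1, InS.one, by simpa using hd⟩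

theorem ideal_le {I J : Ideal (D G)} (h : ∀ a : B0 G, ι a ∈ I → ι a ∈ J) : I ≤ J := by
  intro x hx
  obtain ⟨a, s, hs, hxa⟩ := exists_rep x
  rw [mem_iff_of_rep hs hxa] at hx ⊢
  exact h a hx

theorem Id_mul {h h' : B G} {g g' : G} (h0 : h ≠ 0) (h0' : h' ≠ 0) (hh : Hom h g) (hh' : Hom h' g') :
    Id h * Id h' = Id (h * h') := by
  apply le_antisymm
  · rw [Ideal.mul_le]
    intro x hx y hy
    obtain ⟨a, s, hs, hxa⟩ := exists_rep x
    obtain ⟨b, t, ht, hyb⟩ := exists_rep y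
    rw [mem_iff_of_rep hs hxa, mem_Id] at hx
    rw [mem_iff_of_rep ht hyb, mem_Id] at hy
    have hst : InS ((s * t : B0 G) : B G) := hs.mul ht
    have hxy : x * y * ι (s * t) = ι (a * b) := by
      rw [map_mul, map_mul, ← hxa, ← hyb]; ring
    rw [mem_iff_of_rep hst hxy, mem_Id]
    obtain ⟨s', hs', h1⟩ := hx
    obtain ⟨t', ht', h2⟩ := hy
    refine ⟨s' * t', hs'.mul ht', ?_⟩
    convert mul_dvd_mul h1 h2 using 1
    push_cast; ring
  · apply ideal_le
    intro a ha
    obtain ⟨s, hs, c, hc⟩ := mem_Id.1 ha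
    have hsa : ι a * ι s = ι (s * a) := by rw [map_mul, mul_comm]
    rw [mem_iff_of_rep hs hsa]
    have hX : IsRelPrime (X (-g, 0) : B G) (X (-g, 1)) := by
      refine ((prime_X _).irreducible.isRelPrime_iff_not_dvd).2 (not_X_dvd (X_ne_zero _) ?_)
      simp [vars_X]
    obtain ⟨q, r, hq, hr, hu⟩ := exists_comb (X_ne_zero _) (X_ne_zero _) (hom_X (-g, 0))
      (hom_X (-g, 1)) hX
    set x : B G := X (-g, 0) with hxdef
    set y : B G := X (-g, 1) with hydef
    have hx : Hom x (-g) := hom_X _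
    have hy : Hom y (-g) := hom_X _
    simp only [neg_neg] at hq hr
    have hc' : Hom c (0 - (g + g')) := by
      apply hom_of_mul (mul_ne_zero h0 h0') (hh.mul hh')
      rw [← hc]
      exact (s * a).2
    have d1 : Hom (h * x) 0 := by simpa using hh.mul hx
    have d2 : Hom (h * y) 0 := by simpa using hh.mul hy
    have d3 : Hom (h' * c * q) 0 := by
      have := (hh'.mul hc').mul hq
      rwa [show g' + (0 - (g + g')) + g = 0 by abel] at this
    have d4 : Hom (h' * c * r) 0 := by
      have := (hh'.mul hc').mul hr
      rwa [show g' + (0 - (g + g')) + g = 0 by abel] at this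
    let u : B0 G := ⟨x * q + y * r, hu.hom⟩
    have hmul : ι (s * a) * ι u
        = ι (⟨h * x, d1⟩ * ⟨h' * c * q, d3⟩ + ⟨h * y, d2⟩ * ⟨h' * c * r, d4⟩ : B0 G) := by
      rw [← map_mul]
      congr 1
      ext1
      simp only [Subring.coe_mul, Subring.coe_add, u]
      rw [hc]; ring
    rw [mem_iff_of_rep (s := u) hu hmul, map_add, map_mul, map_mul]
    refine Ideal.add_mem _ (Ideal.mul_mem_mul ?_ ?_) (Ideal.mul_mem_mul ?_ ?_) <;>
      apply mem_Id_of_dvd <;> simp [mul_assoc]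

theorem Id_zero_deg (a : B0 G) : Id (a : B G) = Ideal.span {ι a} := by
  apply le_antisymm
  · apply ideal_le
    intro b hb
    obtain ⟨s, hs, c, hc⟩ := mem_Id.1 hb
    have hsb : ι b * ι s = ι (s * b) := by rw [map_mul, mul_comm]
    rw [mem_iff_of_rep hs hsb]
    by_cases ha : (a : B G) = 0
    · have : s * b = 0 := by ext1; simp [hc, ha]
      rw [this]; simp
    have hc0 : Hom c (0 - 0) := by
      apply hom_of_mul ha a.2
      rw [← hc]; exact (s * b).2
    rw [sub_zero] at hc0
    have : s * b = a * ⟨c, hc0⟩ := by ext1; simp [hc]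
    rw [this, map_mul]
    exact Ideal.mul_mem_right _ _ (Ideal.mem_span_singleton_self _)
  · rw [Ideal.span_singleton_le_iff_mem]
    exact mem_Id_of_dvd dvd_rfl

theorem exists_Id (I : Ideal (D G)) (hI : I ≠ ⊥) :
    ∃ (h : B G) (g : G), h ≠ 0 ∧ Hom h g ∧ I = Id h := by
  let J : Set (B G) := {f | f ≠ 0 ∧ ∃ g, Hom f g ∧
    ∀ (c : B G) (hc : Hom (f * c) 0), ι ⟨f * c, hc⟩ ∈ I}
  have hJ : ∀ a : B0 G, (a : B G) ≠ 0 → ι a ∈ I → (a : B G) ∈ J := by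
    intro a ha0 ha
    refine ⟨ha0, 0, a.2, fun c hc => ?_⟩
    have hc0 : Hom c (0 - 0) := hom_of_mul ha0 a.2 hc
    rw [sub_zero] at hc0
    have : (⟨(a : B G) * c, hc⟩ : B0 G) = a * ⟨c, hc0⟩ := rfl
    rw [this, map_mul]
    exact Ideal.mul_mem_right _ _ ha
  have hne : J.Nonempty := by
    obtain ⟨x, hx, hx0⟩ := Submodule.exists_mem_ne_zero_of_ne_bot hI
    obtain ⟨a, s, hs, hxa⟩ := exists_rep x
    refine ⟨a, hJ a ?_ ((mem_iff_of_rep hs hxa).1 hx)⟩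
    intro ha
    have : a = 0 := by ext1; exact ha
    rw [this, map_zero] at hxa
    rcases mul_eq_zero.1 hxa with h | h
    · exact hx0 h
    · exact (isUnit_ι hs).ne_zero h
  obtain ⟨h, ⟨hh0, g, hhg, hhI⟩, hmin⟩ :=
    (wellFounded_dvdNotUnit (α := B G)).has_min J hne
  refine ⟨h, g, hh0, hhg, le_antisymm ?_ ?_⟩
  · apply ideal_le
    intro a ha
    by_cases ha0 : (a : B G) = 0
    · exact mem_Id_of_dvd (by rw [ha0]; exact dvd_zero _)
    obtain ⟨d, p, q, e, hd0, hd, hp, hq, h1, h2, h3⟩ := exists_gcd hh0 ha0 hhg a.2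
    have hp0 : p ≠ 0 := by rintro rfl; simp at h1; exact hh0 h1
    have hq0 : q ≠ 0 := by rintro rfl; simp at h2; exact ha0 (by rw [h2]; rfl)
    obtain ⟨y, z, hy, hz, hu⟩ := exists_comb hp0 hq0 hp hq h3
    have hdJ : d ∈ J := by
      refine ⟨hd0, e, hd, fun c hc => ?_⟩
      have hc' : Hom c (0 - e) := hom_of_mul hd0 hd hc
      have e1 : Hom (h * (y * c)) 0 := by
        have := hhg.mul (hy.mul hc')
        rwa [show g + (-(g - e) + (0 - e)) = 0 by abel] at this
      have e2 : Hom (z * c) 0 := by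
        have := hz.mul hc'
        rwa [show (-(0 - e) + (0 - e)) = 0 by abel] at this
      have hmul : ι ⟨d * c, hc⟩ * ι ⟨_, hu.hom⟩ =
          ι (⟨h * (y * c), e1⟩ + a * ⟨z * c, e2⟩ : B0 G) := by
        rw [← map_mul]
        congr 1
        ext1
        simp only [Subring.coe_mul, Subring.coe_add]
        rw [h2, h1]; ring
      rw [mem_iff_of_rep (s := ⟨_, hu.hom⟩) hu hmul, map_add, map_mul]
      exact Ideal.add_mem _ (hhI _ _) (Ideal.mul_mem_right _ _ ha)
    have hpu : IsUnit p := by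
      by_contra hpu
      exact hmin d hdJ ⟨hd0, p, hpu, h1⟩
    apply mem_Id_of_dvd
    rw [h2, h1]
    exact mul_dvd_mul (dvd_refl d) hpu.dvd
  · apply ideal_le
    intro a ha
    obtain ⟨s, hs, c, hc⟩ := mem_Id.1 ha
    have hsa : ι a * ι s = ι (s * a) := by rw [map_mul, mul_comm]
    rw [mem_iff_of_rep hs hsa]
    have hh : Hom (h * c) 0 := by rw [← hc]; exact (s * a).2
    have : s * a = ⟨h * c, hh⟩ := by ext1; exact hc
    rw [this]
    exact hhI _ _

theorem Id_ne_bot {h : B G} {g : G} (h0 : h ≠ 0) (hh : Hom h g) : Id h ≠ ⊥ := by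
  intro hb
  have d1 : Hom (h * X (-g, 0)) 0 := by simpa using hh.mul (hom_X (-g, 0))
  have : ι ⟨_, d1⟩ ∈ Id h := mem_Id_of_dvd (dvd_mul_right _ _)
  rw [hb, Ideal.mem_bot, map_eq_zero_iff _ ι_inj] at this
  exact mul_ne_zero h0 (X_ne_zero _) (congrArg Subtype.val this)

theorem dvd_of_Id_le {f f' : B G} {g : G} (hf : Hom f g)
    (h : Id f ≤ Id f') : ∃ s : B G, InS s ∧ f' ∣ f * s := by
  have key : ∀ n : ℕ, ∃ s : B G, InS s ∧ f' ∣ f * (X (-g, n) * s) := by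
    intro n
    have d1 : Hom (f * X (-g, n)) 0 := by simpa using hf.mul (hom_X (-g, n))
    have : ι ⟨_, d1⟩ ∈ Id f := mem_Id_of_dvd (dvd_mul_right _ _)
    obtain ⟨s, hs, hd⟩ := mem_Id.1 (h this)
    refine ⟨s, hs, ?_⟩
    convert hd using 1
    simp only
    ring
  obtain ⟨s, hs, c, hc⟩ := key 0
  obtain ⟨t, ht, c', hc'⟩ := key 1
  refine ⟨s * t, hs.mul ht, ?_⟩
  by_cases hf0 : f' = 0
  · have hz : ∀ z, ¬ (X z : B G) = 0 := X_ne_zero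
    simp [hf0, hs.ne, hz] at hc
    simp [hc]
  have e : X (-g, 1) * (c * t) = X (-g, 0) * (c' * s) := by
    apply mul_left_cancel₀ hf0
    calc f' * (X (-g, 1) * (c * t)) = (f' * c) * X (-g, 1) * t := by ring
      _ = (f' * c') * X (-g, 0) * s := by rw [← hc, ← hc']; ring
      _ = _ := by ring
  have hXX : ¬ (X (-g, 0) : B G) ∣ X (-g, 1) := not_X_dvd (X_ne_zero _) (by simp [vars_X])
  obtain ⟨k, hk⟩ : (X (-g, 0) : B G) ∣ c * t :=
    ((prime_X _).dvd_or_dvd (Dvd.intro _ e.symm)).resolve_left hXX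
  refine ⟨k, ?_⟩
  apply mul_left_cancel₀ (X_ne_zero (R := ℚ) ((-g, 0) : G × ℕ))
  calc _ = f * (X (-g, 0) * s) * t := by ring
    _ = f' * (c * t) := by rw [hc]; ring
    _ = _ := by rw [hk]; ring

theorem deg_eq_of_Id_eq {f f' : B G} {g g' : G} (hf0 : f ≠ 0) (hf0' : f' ≠ 0)
    (hf : Hom f g) (hf' : Hom f' g') (h : Id f = Id f') : g = g' := by
  obtain ⟨s, hs, c, hc⟩ := dvd_of_Id_le hf h.le
  obtain ⟨t, ht, c', hc'⟩ := dvd_of_Id_le hf' h.ge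
  have hcc : s * t = c * c' := by
    apply mul_left_cancel₀ (mul_ne_zero hf0 hf0')
    calc _ = (f * s) * (f' * t) := by ring
      _ = _ := by rw [hc, hc']; ring
  have hcd : Hom c (g + 0 - g') := by
    apply hom_of_mul hf0' hf'
    rw [← hc]
    exact hf.mul hs.hom
  have := (hs.mul ht).deg c _ ⟨c', hcc⟩ hcd
  rw [add_zero] at this
  exact sub_eq_zero.1 this

theorem dedekind_of_mul_principal {R : Type} [CommRing R] [IsDomain R]
    (H : ∀ I : Ideal R, I ≠ ⊥ → ∃ (J : Ideal R) (x : R), x ≠ 0 ∧ I * J = Ideal.span {x}) :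
    IsDedekindDomain R := by
  rw [isDedekindDomain_iff_mul_inv_cancel (K := FractionRing R)]
  intro I hI
  rw [FractionalIdeal.mul_inv_cancel_iff_isUnit]
  obtain ⟨a, J, ha, rfl⟩ := FractionalIdeal.exists_eq_spanSingleton_mul I
  have ha' : algebraMap R (FractionRing R) a ≠ 0 := by
    simpa using ha
  have hJ : J ≠ ⊥ := by
    rintro rfl
    simp at hI
  obtain ⟨J', x, hx, hm⟩ := H J hJ
  have unit_span : ∀ x : FractionRing R, x ≠ 0 →
      IsUnit (FractionalIdeal.spanSingleton R⁰ x) := fun x hx =>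
    .of_mul_eq_one _ (FractionalIdeal.spanSingleton_mul_inv _ hx)
  refine (unit_span _ (inv_ne_zero ha')).mul ?_
  have := congrArg (fun J : Ideal R => (J : FractionalIdeal R⁰ (FractionRing R))) hm
  simp only [FractionalIdeal.coeIdeal_mul, FractionalIdeal.coeIdeal_span_singleton] at this
  refine isUnit_of_mul_isUnit_left (y := ((J' : Ideal R) :
    FractionalIdeal R⁰ (FractionRing R))) ?_
  rw [this]
  exact unit_span _ (by simpa using hx)

theorem isDedekind : IsDedekindDomain (D G) := by
  apply dedekind_of_mul_principal
  intro J hJ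
  obtain ⟨h, g, h0, hh, rfl⟩ := exists_Id J hJ
  have d1 : Hom (h * X (-g, 0)) 0 := by simpa using hh.mul (hom_X (-g, 0))
  refine ⟨Id (X (-g, 0)), ι ⟨_, d1⟩, ?_, ?_⟩
  · rw [Ne, map_eq_zero_iff _ ι_inj]
    intro h
    exact mul_ne_zero h0 (X_ne_zero _) (congrArg Subtype.val h)
  · rw [Id_mul h0 (X_ne_zero _) hh (hom_X _), ← Id_zero_deg]

theorem Id_X_prime (v : G × ℕ) : (Id (X v : B G)).IsPrime := by
  have mem : ∀ a : B0 G, ι a ∈ Id (X v : B G) ↔ (X v : B G) ∣ a := by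
    intro a
    refine ⟨fun h => ?_, mem_Id_of_dvd⟩
    obtain ⟨s, hs, hd⟩ := mem_Id.1 h
    exact ((prime_X v).dvd_or_dvd hd).resolve_left (hs.nvar v)
  constructor
  · rw [Ideal.ne_top_iff_one, ← map_one ι, mem]
    exact InS.one.nvar v
  · intro x y hxy
    obtain ⟨a, s, hs, hxa⟩ := exists_rep x
    obtain ⟨b, t, ht, hyb⟩ := exists_rep y
    have hst : InS ((s * t : B0 G) : B G) := hs.mul ht
    have hab : x * y * ι (s * t) = ι (a * b) := by
      rw [map_mul, map_mul, ← hxa, ← hyb]; ring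
    rw [mem_iff_of_rep hst hab, mem] at hxy
    rw [mem_iff_of_rep hs hxa, mem_iff_of_rep ht hyb, mem, mem]
    exact (prime_X v).dvd_or_dvd hxy

theorem Id_X_inj (g : G) : Function.Injective fun n : ℕ => Id (X (g, n) : B G) := by
  intro m n h
  by_contra hmn
  obtain ⟨s, hs, hd⟩ := dvd_of_Id_le (hom_X _) h.le
  rcases (prime_X _).dvd_or_dvd hd with h | h
  · exact not_X_dvd (X_ne_zero _) (by simpa [vars_X] using Ne.symm hmn) h
  · exact hs.nvar _ h

attribute [local instance] isDedekind

/-- `Id` as a nonzero ideal -/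
noncomputable def IdX (v : G × ℕ) : (Ideal (D G))⁰ :=
  ⟨Id (X v), mem_nonZeroDivisors_iff_ne_zero.2 (Id_ne_bot (X_ne_zero _) (hom_X v))⟩

theorem mk0_inv (I : (Ideal (D G))⁰) {h : B G} {g : G} (h0 : h ≠ 0) (hh : Hom h g)
    (hI : (I : Ideal (D G)) = Id h) :
    ClassGroup.mk0 I = (ClassGroup.mk0 (IdX (-g, 0)))⁻¹ := by
  have d1 : Hom (h * X (-g, 0)) 0 := by simpa using hh.mul (hom_X (-g, 0))
  rw [ClassGroup.mk0_eq_mk0_inv_iff]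
  refine ⟨ι ⟨_, d1⟩, ?_, ?_⟩
  · rw [Ne, map_eq_zero_iff _ ι_inj]
    intro h
    exact mul_ne_zero h0 (X_ne_zero _) (congrArg Subtype.val h)
  · rw [hI, ← Id_zero_deg]
    exact Id_mul h0 (X_ne_zero _) hh (hom_X _)

theorem mk0_eq (I : (Ideal (D G))⁰) {h : B G} {g : G} (h0 : h ≠ 0) (hh : Hom h g)
    (hI : (I : Ideal (D G)) = Id h) :
    ClassGroup.mk0 I = ClassGroup.mk0 (IdX (g, 0)) := by
  rw [mk0_inv I h0 hh hI, ← mk0_inv (IdX (g, 0)) (X_ne_zero _) (hom_X (g, 0)) rfl]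

/-- the isomorphism -/
noncomputable def toCl : G →+ Additive (ClassGroup (D G)) :=
  AddMonoidHom.mk' (fun g => Additive.ofMul (ClassGroup.mk0 (IdX (g, 0)))) (by
    intro a b
    have e := MonoidHom.map_mul (ClassGroup.mk0 (R := D G)) (IdX (a, 0)) (IdX (b, 0))
    rw [← ofMul_mul, ← e]
    congr 1
    symm
    apply mk0_eq _ (mul_ne_zero (X_ne_zero (a, 0)) (X_ne_zero (b, 0)))
      ((hom_X (a, 0)).mul (hom_X (b, 0)))
    exact Id_mul (X_ne_zero _) (X_ne_zero _) (hom_X _) (hom_X _))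

theorem toCl_bij : Function.Bijective (toCl (G := G)) := by
  constructor
  · rw [injective_iff_map_eq_zero]
    intro g hg
    have hg' : ClassGroup.mk0 (IdX (g, 0)) = 1 := hg
    obtain ⟨⟨x, hx⟩⟩ := (ClassGroup.mk0_eq_one_iff (IdX (g, 0)).2).1 hg'
    obtain ⟨a, s, hs, hxa⟩ := exists_rep x
    have hspan : Id (X (g, 0) : B G) = Id (a : B G) := by
      rw [Id_zero_deg, ← hxa, Ideal.span_singleton_mul_right_unit (isUnit_ι hs)]
      exact hx
    have ha0 : (a : B G) ≠ 0 := by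
      intro ha
      apply Id_ne_bot (X_ne_zero _) (hom_X (g, 0))
      have : a = 0 := by ext1; exact ha
      rw [hspan, Id_zero_deg, this]; simp
    exact deg_eq_of_Id_eq (X_ne_zero _) ha0 (hom_X (g, 0)) a.2 hspan
  · intro c
    obtain ⟨I, hI⟩ := ClassGroup.mk0_surjective c.toMul
    obtain ⟨h, g, h0, hh, hIh⟩ := exists_Id (I : Ideal (D G)) (nonZeroDivisors.coe_ne_zero I)
    refine ⟨g, ?_⟩
    have := mk0_eq I h0 hh hIh
    rw [hI] at this
    exact congrArg Additive.ofMul this.symm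

theorem not_field : ¬ IsField (D G) := by
  intro hF
  have hp := Id_X_prime ((0, 0) : G × ℕ)
  have hne := Id_ne_bot (X_ne_zero _) (hom_X ((0, 0) : G × ℕ))
  let := hF.toField
  exact (Ideal.eq_bot_or_top (Id (X ((0, 0) : G × ℕ)))).elim hne hp.ne_top

theorem infinite (c : ClassGroup (D G)) :
    { P : (Ideal (D G))⁰ | (P : Ideal (D G)).IsPrime ∧ ClassGroup.mk0 P = c }.Infinite := by
  obtain ⟨g, hg⟩ := toCl_bij.2 (Additive.ofMul c)
  have hg' : ClassGroup.mk0 (IdX (g, 0)) = c := hg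
  apply Set.infinite_of_injective_forall_mem (f := fun n : ℕ => IdX (g, n))
  · intro m n h
    exact Id_X_inj g (congrArg Subtype.val h)
  · intro n
    refine ⟨Id_X_prime _, ?_⟩
    rw [← hg']
    exact mk0_eq _ (X_ne_zero _) (hom_X (g, n)) rfl

end DedReal


/-- If `G` is a countably generated abelian group of finite exponent (equivalently, a direct
sum of a countable family of cyclic groups of bounded order), then there is a Dedekind
domain `D`, not a field, with `Cl(D) ≅ G` such that every class of `Cl(D)` contains
infinitely many nonzero prime ideals. -/
theorem dedekind_realization_of_countably_generated_bounded (G : Type) [AddCommGroup G]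
    (hcount : ∃ S : Set G, S.Countable ∧ AddSubgroup.closure S = ⊤)
    (hexp : ∃ n : ℕ, 1 ≤ n ∧ ∀ g : G, n • g = 0) :
    ∃ (D : Type) (_ : CommRing D) (_ : IsDedekindDomain D),
      ¬ IsField D ∧
      Nonempty (Additive (ClassGroup D) ≃+ G) ∧
      ∀ g : ClassGroup D,
        { P : (Ideal D)⁰ | (P : Ideal D).IsPrime ∧ ClassGroup.mk0 P = g }.Infinite := by
  exact ⟨DedReal.D G, inferInstance, DedReal.isDedekind, DedReal.not_field,
    ⟨(AddEquiv.ofBijective DedReal.toCl DedReal.toCl_bij).symm⟩, DedReal.infinite⟩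
end

section
/- Let D be an integral domain with fraction field K, Q a prime ideal of D, M = D ∖ Q, and let J be a fractional s-ideal of M. Then (JD)⁻¹ = J⁻¹D, i.e., the set {x ∈ K | x·(JD) ⊆ D} equals the D-submodule of K generated by J⁻¹ = {x ∈ q(M) | xJ ⊆ M}. -/
open scoped Pointwise

noncomputable section

variable (D : Type*) [CommRing D] [IsDomain D]

/-- The image in the fraction field `K` of the monoid `M = D \ Q`. -/
def monoidMK (Q : Ideal D) : Set (FractionRing D) :=
  {x | ∃ a : D, a ∉ Q ∧ x = algebraMap D (FractionRing D) a}

/-- The quotient group `q(M) = {a·b⁻¹ | a, b ∈ M} ⊆ K` of the monoid `M = D \ Q`. -/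
def quotM (Q : Ideal D) : Set (FractionRing D) :=
  {x | ∃ a b : D, a ∉ Q ∧ b ∉ Q ∧
    x = algebraMap D (FractionRing D) a / algebraMap D (FractionRing D) b}

/-- For a subset `X ⊆ q(M)`, the inverse `X⁻¹ = {x ∈ q(M) | x·X ⊆ M}`. -/
def invM (Q : Ideal D) (X : Set (FractionRing D)) : Set (FractionRing D) :=
  {x | x ∈ quotM D Q ∧ ∀ y ∈ X, x * y ∈ monoidMK D Q}

/-- `J` is a fractional s-ideal of the monoid `M = D \ Q`: a nonempty subset of `q(M)`
with `J·M = J` such that `c·J ⊆ M` for some `c ∈ M`. -/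
def IsFracSIdeal (Q : Ideal D) (J : Set (FractionRing D)) : Prop :=
  J.Nonempty ∧ J ⊆ quotM D Q ∧ J * monoidMK D Q = J ∧
    ∃ c ∈ monoidMK D Q, (c • J : Set (FractionRing D)) ⊆ monoidMK D Q

theorem mem_invM_aux (Q : Ideal D) (hQ : Q.IsPrime) (J : Set (FractionRing D))
    (hJ : J ⊆ quotM D Q) (y : FractionRing D)
    (hy : ∀ j ∈ J, ∃ d : D, algebraMap D (FractionRing D) d = y * j)
    (j : FractionRing D) (hj : j ∈ J) (d : D) (hd : d ∉ Q)
    (hdj : algebraMap D (FractionRing D) d = y * j) : y ∈ invM D Q J := by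
  have hne : ∀ a : D, a ∉ Q → algebraMap D (FractionRing D) a ≠ 0 := by
    intro a ha h
    apply ha
    have h0 : a = 0 := (IsFractionRing.injective D (FractionRing D)) (by rw [h, map_zero])
    rw [h0]
    exact Q.zero_mem
  have hmul : ∀ a b : D, a ∉ Q → b ∉ Q → a * b ∉ Q := fun a b ha hb h =>
    (hQ.mem_or_mem h).elim ha hb
  obtain ⟨a, b, ha, hb, rfl⟩ := hJ hj
  have ha0 := hne a ha
  have hb0 := hne b hb
  have hyeq : y * algebraMap D (FractionRing D) a = algebraMap D (FractionRing D) (d * b) := by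
    rw [map_mul, hdj]
    field_simp
  refine ⟨⟨d * b, a, hmul _ _ hd hb, ha, by rw [← hyeq]; field_simp⟩, ?_⟩
  intro j' hj'
  obtain ⟨d', hd'⟩ := hy j' hj'
  refine ⟨d', ?_, hd'.symm⟩
  obtain ⟨a', b', ha', hb', rfl⟩ := hJ hj'
  have hb0' := hne b' hb'
  have key : d * b * a' = d' * (a * b') := by
    apply IsFractionRing.injective D (FractionRing D)
    rw [map_mul, ← hyeq, map_mul, hd', map_mul]
    field_simp
  intro h
  exact hmul _ _ (hmul _ _ hd hb) ha' (key ▸ Q.mul_mem_right _ h)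

/-- **Lemma 3.1(2).** Let `D` be a domain with fraction field `K`, `Q` a prime ideal of `D`,
`M = D \ Q`, and `J` a fractional s-ideal of `M`. Then `(JD)⁻¹ = J⁻¹D`: the set
`{x ∈ K | x·(JD) ⊆ D}` equals the `D`-submodule of `K` generated by
`J⁻¹ = {x ∈ q(M) | x·J ⊆ M}`. -/
theorem inv_span_eq_span_inv (Q : Ideal D) (hQ : Q.IsPrime)
    (J : Set (FractionRing D)) (hJ : IsFracSIdeal D Q J) :
    (1 : Submodule D (FractionRing D)) / Submodule.span D J =
      Submodule.span D (invM D Q J) := by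
  obtain ⟨⟨j, hj⟩, hsub, -, c, ⟨c0, hc0, rfl⟩, hc⟩ := hJ
  have hcJ : ∀ y ∈ J, ∃ d : D, d ∉ Q ∧
      algebraMap D (FractionRing D) d = algebraMap D (FractionRing D) c0 * y := by
    intro y hy
    obtain ⟨d, hd, h⟩ := hc (Set.smul_mem_smul_set hy)
    exact ⟨d, hd, by rw [← h, smul_eq_mul]⟩
  apply le_antisymm
  · intro x hx
    rw [Submodule.mem_div_iff_forall_mul_mem] at hx
    have hxJ : ∀ y ∈ J, ∃ d : D, algebraMap D (FractionRing D) d = x * y := fun y hy =>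
      Submodule.mem_one.1 (hx y (Submodule.subset_span hy))
    obtain ⟨d, hd⟩ := hxJ j hj
    by_cases hdQ : d ∈ Q
    · obtain ⟨e, he, hej⟩ := hcJ j hj
      have h1 : algebraMap D (FractionRing D) c0 ∈ invM D Q J :=
        mem_invM_aux D Q hQ J hsub _ (fun y hy => (hcJ y hy).imp fun _ h => h.2) j hj e he hej
      have h2 : x + algebraMap D (FractionRing D) c0 ∈ invM D Q J := by
        refine mem_invM_aux D Q hQ J hsub _ ?_ j hj (d + e)
          (fun h => he ((Ideal.add_mem_iff_right Q hdQ).1 h)) (by rw [map_add, hd, hej, add_mul])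
        intro y hy
        obtain ⟨u, hu⟩ := hxJ y hy
        obtain ⟨v, -, hv⟩ := hcJ y hy
        exact ⟨u + v, by rw [map_add, hu, hv, add_mul]⟩
      have h3 := Submodule.sub_mem _ (Submodule.subset_span (R := D) h2)
        (Submodule.subset_span (R := D) h1)
      rwa [add_sub_cancel_right] at h3
    · exact Submodule.subset_span (mem_invM_aux D Q hQ J hsub x hxJ j hj d hdQ hd)
  · rw [Submodule.le_div_iff_mul_le, Submodule.span_mul_span, Submodule.span_le]
    rintro _ ⟨x, hx, y, hy, rfl⟩
    obtain ⟨a, -, h⟩ := hx.2 y hy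
    exact Submodule.mem_one.2 ⟨a, h.symm⟩

end
end

section
/- Let D be an integral domain with fraction field K, Q a prime ideal of D, M = D ∖ Q, and let J be a fractional s-ideal of M. Then JD is t-invertible, i.e., ((JD)·(JD)⁻¹)_t = D (with product of D-submodules of K), if and only if J is t-invertible, i.e., (J·J⁻¹)_t = M, where J·J⁻¹ = {xy | x ∈ J, y ∈ J⁻¹} and the t-closure is computed inside q(M). -/
open scoped Pointwise

noncomputable section

variable (D : Type*) [CommRing D] [IsDomain D]

/-- The `t`-closure of a subset `X ⊆ q(M)`: the union of `E_v = (E⁻¹)⁻¹` over all finite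
nonempty subsets `E ⊆ X`. -/
def tM (Q : Ideal D) (X : Set (FractionRing D)) : Set (FractionRing D) :=
  {x | ∃ E : Set (FractionRing D), E ⊆ X ∧ E.Finite ∧ E.Nonempty ∧ x ∈ invM D Q (invM D Q E)}

/-- The `t`-closure of a `D`-submodule `N` of `K`: the union of `B_v = ((B⁻¹)⁻¹)` over all
nonzero finitely generated `D`-submodules `B ⊆ N` of `K`. -/
def tD (N : Submodule D (FractionRing D)) : Set (FractionRing D) :=
  {x | ∃ B : Submodule D (FractionRing D), B.FG ∧ B ≠ ⊥ ∧ B ≤ N ∧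
    x ∈ (1 : Submodule D (FractionRing D)) / ((1 : Submodule D (FractionRing D)) / B)}

section Helpers

variable {D}

lemma aux_ne {Q : Ideal D} {a : D} (ha : a ∉ Q) : algebraMap D (FractionRing D) a ≠ 0 := by
  intro h
  have h0 : a = 0 := (IsFractionRing.injective D (FractionRing D)) (by simpa using h)
  exact ha (h0 ▸ Q.zero_mem)

lemma aux_M_sub_one {Q : Ideal D} {x : FractionRing D} (hx : x ∈ monoidMK D Q) :
    x ∈ (1 : Submodule D (FractionRing D)) := by
  obtain ⟨a, -, rfl⟩ := hx
  exact Submodule.mem_one.2 ⟨a, rfl⟩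

lemma aux_M_sub_q {Q : Ideal D} (hQ : Q.IsPrime) {x : FractionRing D} (hx : x ∈ monoidMK D Q) :
    x ∈ quotM D Q := by
  obtain ⟨a, ha, rfl⟩ := hx
  exact ⟨a, 1, ha, fun h => hQ.ne_top ((Ideal.eq_top_iff_one Q).2 h), by simp⟩

lemma aux_q_mul {Q : Ideal D} (hQ : Q.IsPrime) {x y : FractionRing D} (hx : x ∈ quotM D Q)
    (hy : y ∈ quotM D Q) : x * y ∈ quotM D Q := by
  obtain ⟨a, b, ha, hb, rfl⟩ := hx
  obtain ⟨c, d, hc, hd, rfl⟩ := hy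
  exact ⟨a * c, b * d, hQ.mul_notMem ha hc, hQ.mul_notMem hb hd, by
    simp only [map_mul]; rw [div_mul_div_comm]⟩

lemma aux_M_mul {Q : Ideal D} (hQ : Q.IsPrime) {x y : FractionRing D} (hx : x ∈ monoidMK D Q)
    (hy : y ∈ monoidMK D Q) : x * y ∈ monoidMK D Q := by
  obtain ⟨a, ha, rfl⟩ := hx
  obtain ⟨c, hc, rfl⟩ := hy
  exact ⟨a * c, hQ.mul_notMem ha hc, by simp only [map_mul]⟩

lemma aux_one_M {Q : Ideal D} (hQ : Q.IsPrime) : (1 : FractionRing D) ∈ monoidMK D Q :=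
  ⟨1, fun h => hQ.ne_top ((Ideal.eq_top_iff_one Q).2 h), by simp⟩

lemma aux_q_inter {Q : Ideal D} {x : FractionRing D} (hx : x ∈ quotM D Q)
    (h1 : x ∈ (1 : Submodule D (FractionRing D))) : x ∈ monoidMK D Q := by
  obtain ⟨a, b, ha, hb, rfl⟩ := hx
  obtain ⟨d, hd⟩ := Submodule.mem_one.1 h1
  refine ⟨d, fun hdQ => ha ?_, hd.symm⟩
  rw [eq_div_iff (aux_ne hb), ← map_mul] at hd
  have := IsFractionRing.injective D (FractionRing D) hd
  rw [← this]
  exact Q.mul_mem_right _ hdQ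

lemma aux_inv_iff {Q : Ideal D} (hQ : Q.IsPrime) {X : Set (FractionRing D)}
    (hX : X ⊆ quotM D Q) {x : FractionRing D} :
    x ∈ invM D Q X ↔
      x ∈ quotM D Q ∧ x ∈ (1 : Submodule D (FractionRing D)) / Submodule.span D X := by
  refine and_congr_right fun hx => ?_
  rw [Submodule.mem_div_iff_forall_mul_mem]
  constructor
  · intro h y hy
    induction hy using Submodule.span_induction with
    | mem y hy => exact aux_M_sub_one (h y hy)
    | zero => simp
    | add y z _ _ h1 h2 => rw [mul_add]; exact add_mem h1 h2
    | smul a y _ h1 => rw [mul_smul_comm]; exact Submodule.smul_mem _ _ h1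
  · intro h y hy
    exact aux_q_inter (aux_q_mul hQ hx (hX hy)) (h y (Submodule.subset_span hy))

lemma aux_local {Q : Ideal D} (hQ : Q.IsPrime) {n y u : FractionRing D} (hy : y ∈ quotM D Q)
    (hu : u ∈ quotM D Q) (h : n * y ∈ (1 : Submodule D (FractionRing D))) :
    n ∈ quotM D Q ∨ n + u ∈ quotM D Q := by
  obtain ⟨a, b, ha, hb, rfl⟩ := hy
  obtain ⟨c, e, hc, he, rfl⟩ := hu
  obtain ⟨d, hd⟩ := Submodule.mem_one.1 h
  have ha' := aux_ne ha
  have hb' := aux_ne hb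
  have he' := aux_ne he
  have hn : n = algebraMap D (FractionRing D) (d * b) / algebraMap D (FractionRing D) a := by
    rw [map_mul, hd]; field_simp
  by_cases hp : d * b ∈ Q
  · right
    refine ⟨d * b * e + a * c, a * e, fun hh => ?_, hQ.mul_notMem ha he, ?_⟩
    · exact hQ.mul_notMem ha hc ((Q.add_mem_iff_right (Q.mul_mem_right _ hp)).1 hh)
    · rw [hn, div_add_div _ _ ha' he']
      simp only [map_mul, map_add]
  · left
    exact ⟨d * b, a, hp, ha, hn⟩

lemma aux_div_eq {Q : Ideal D} (hQ : Q.IsPrime) {X : Set (FractionRing D)}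
    (hX : X ⊆ quotM D Q) (hne : X.Nonempty) (hinv : (invM D Q X).Nonempty) :
    (1 : Submodule D (FractionRing D)) / Submodule.span D X = Submodule.span D (invM D Q X) := by
  apply le_antisymm
  · intro n hn
    obtain ⟨y, hy⟩ := hne
    obtain ⟨u, hu⟩ := hinv
    have hu' := (aux_inv_iff hQ hX).1 hu
    rcases aux_local hQ (hX hy) hu'.1
      (Submodule.mem_div_iff_forall_mul_mem.1 hn y (Submodule.subset_span hy)) with h | h
    · exact Submodule.subset_span ((aux_inv_iff hQ hX).2 ⟨h, hn⟩)
    · have h2 : n + u ∈ Submodule.span D (invM D Q X) :=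
        Submodule.subset_span ((aux_inv_iff hQ hX).2 ⟨h, add_mem hn hu'.2⟩)
      have := sub_mem h2 (Submodule.subset_span hu)
      simpa using this
  · rw [Submodule.span_le]
    intro x hx
    exact ((aux_inv_iff hQ hX).1 hx).2

end Helpers

/-- **Lemma 3.1(5).** Let `D` be a domain with fraction field `K`, `Q` a prime ideal of `D`,
`M = D \ Q`, and `J` a fractional s-ideal of `M`. Then `JD` is `t`-invertible, i.e.
`((JD)·(JD)⁻¹)_t = D`, if and only if `J` is `t`-invertible, i.e. `(J·J⁻¹)_t = M`. -/
theorem t_invertible_span_iff_t_invertible (Q : Ideal D) (hQ : Q.IsPrime)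
    (J : Set (FractionRing D)) (hJ : IsFracSIdeal D Q J) :
    tD D (Submodule.span D J *
        ((1 : Submodule D (FractionRing D)) / Submodule.span D J)) =
      ((1 : Submodule D (FractionRing D)) : Set (FractionRing D)) ↔
    tM D Q (J * invM D Q J) = monoidMK D Q := by
  obtain ⟨hJne, hJq, hJM, c, hc, hcJ⟩ := hJ
  have hinv : (invM D Q J).Nonempty :=
    ⟨c, aux_M_sub_q hQ hc, fun y hy => hcJ (Set.smul_mem_smul_set hy)⟩
  have hP : J * invM D Q J ⊆ monoidMK D Q := by
    rintro _ ⟨x, hx, y, hy, rfl⟩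
    have := hy.2 x hx
    rwa [mul_comm] at this
  have hspan : Submodule.span D J * ((1 : Submodule D (FractionRing D)) / Submodule.span D J)
      = Submodule.span D (J * invM D Q J) := by
    rw [aux_div_eq hQ hJq hJne hinv, Submodule.span_mul_span]
  have hPne : (J * invM D Q J).Nonempty := hJne.mul hinv
  have key : ∀ E ⊆ J * invM D Q J, (1 : FractionRing D) ∈ invM D Q E := fun E hE =>
    ⟨aux_M_sub_q hQ (aux_one_M hQ), fun y hy => by rw [one_mul]; exact hP (hE hy)⟩
  rw [hspan]
  constructor
  · intro h
    have h1 : (1 : FractionRing D) ∈ tD D (Submodule.span D (J * invM D Q J)) := by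
      rw [h]; exact Submodule.one_le.1 le_rfl
    obtain ⟨B, ⟨S, hS⟩, hB0, hBle, hB⟩ := h1
    obtain ⟨E, hE, hSE⟩ : ∃ E : Finset (FractionRing D), (E : Set _) ⊆ J * invM D Q J ∧
        (S : Set (FractionRing D)) ⊆ Submodule.span D (E : Set (FractionRing D)) := by
      apply Submodule.subset_span_finite_of_subset_span
      rw [← hS] at hBle
      exact Submodule.span_le.1 hBle
    have hBE : B ≤ Submodule.span D (E : Set (FractionRing D)) := by
      rw [← hS]; exact Submodule.span_le.2 hSE
    have hEne : (E : Set (FractionRing D)).Nonempty := by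
      rw [Set.nonempty_iff_ne_empty]
      intro h0
      rw [h0, Submodule.span_empty] at hBE
      exact hB0 (le_bot_iff.1 hBE)
    have hEq : (E : Set (FractionRing D)) ⊆ quotM D Q := fun x hx => aux_M_sub_q hQ (hP (hE hx))
    ext x
    constructor
    · rintro ⟨F, hF, -, -, hx⟩
      simpa using hx.2 1 (key F hF)
    · intro hx
      refine ⟨E, hE, E.finite_toSet, hEne, aux_M_sub_q hQ hx, fun y hy => aux_M_mul hQ hx ?_⟩
      have hy' := (aux_inv_iff hQ hEq).1 hy
      refine aux_q_inter hy'.1 ?_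
      have : y ∈ (1 : Submodule D (FractionRing D)) / B :=
        Submodule.mem_div_iff_forall_mul_mem.2 fun z hz =>
          Submodule.mem_div_iff_forall_mul_mem.1 hy'.2 z (hBE hz)
      simpa using Submodule.mem_div_iff_forall_mul_mem.1 hB y this
  · intro h
    have h1 : (1 : FractionRing D) ∈ tM D Q (J * invM D Q J) := by
      rw [h]; exact aux_one_M hQ
    obtain ⟨E, hE, hEfin, hEne, hE1⟩ := h1
    have hEq : E ⊆ quotM D Q := fun x hx => aux_M_sub_q hQ (hP (hE hx))
    ext x
    constructor
    · rintro ⟨B, -, -, hB, hx⟩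
      have : (1 : FractionRing D) ∈ (1 : Submodule D (FractionRing D)) / B := by
        rw [Submodule.mem_div_iff_forall_mul_mem]
        intro z hz
        rw [one_mul]
        exact Submodule.span_le.2 (fun w hw => aux_M_sub_one (hP hw)) (hB hz)
      simpa using Submodule.mem_div_iff_forall_mul_mem.1 hx 1 this
    · intro hx
      obtain ⟨d, rfl⟩ := Submodule.mem_one.1 hx
      refine ⟨Submodule.span D E, Submodule.fg_span hEfin, ?_, Submodule.span_mono hE, ?_⟩
      · obtain ⟨e, he⟩ := hEne
        intro h0
        have he0 : e = 0 := by
          have := Submodule.subset_span (R := D) he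
          rw [h0] at this
          simpa using this
        obtain ⟨a, ha, hae⟩ := hP (hE he)
        exact aux_ne ha (hae ▸ he0)
      · rw [aux_div_eq hQ hEq hEne ⟨1, key E hE⟩, Submodule.mem_div_iff_forall_mul_mem]
        intro y hy
        rw [← Algebra.smul_def]
        apply Submodule.smul_mem
        refine Submodule.span_le.2 (fun w hw => ?_) hy
        have := hE1.2 w hw
        rw [one_mul] at this
        exact aux_M_sub_one this

end
end

section
/- Let R be a Dedekind domain that is not a field such that Cl(R) is finite with |Cl(R)| ≥ 3 and every class of Cl(R) contains infinitely many nonzero prime ideals of R. Then there exists N ∈ ℕ such that for every nonzero nonunit a ∈ R there is some d ∈ Δ*(Cl(R)) for which the set of lengths L(a) is an almost arithmetic multiprogression (AAMP) with difference d and bound N. -/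
open scoped nonZeroDivisors

/-- The set of lengths `L(a)` of `a`: the set of all `k` such that `a` is a product of `k`
irreducible elements. -/
def setOfLengths {R : Type*} [CommMonoid R] (a : R) : Set ℕ :=
  {k | ∃ s : Multiset R, (∀ u ∈ s, Irreducible u) ∧ Multiset.card s = k ∧ s.prod = a}

/-- The set of distances `Δ(L)` of a set `L ⊆ ℤ`: all gaps between consecutive elements. -/
def setDistances (L : Set ℤ) : Set ℤ :=
  {d | ∃ x ∈ L, ∃ y ∈ L, x < y ∧ y - x = d ∧ ∀ z ∈ L, ¬(x < z ∧ z < y)}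

/-- A multiset over `G₀ ⊆ G` is a zero-sum sequence if its product (written
multiplicatively) is trivial. -/
def IsZeroSumSeq {G : Type*} [CommGroup G] (G₀ : Set G) (s : Multiset G) : Prop :=
  (∀ g ∈ s, g ∈ G₀) ∧ s.prod = 1

/-- An element of `B(G₀)` is irreducible (an atom) if it is nonempty and is not the union
of two nonempty zero-sum sequences. -/
def IsZeroSumAtom {G : Type*} [CommGroup G] (G₀ : Set G) (s : Multiset G) : Prop :=
  IsZeroSumSeq G₀ s ∧ s ≠ 0 ∧
    ∀ t u : Multiset G, IsZeroSumSeq G₀ t → IsZeroSumSeq G₀ u → t ≠ 0 → u ≠ 0 → s ≠ t + u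

/-- The set of lengths of a zero-sum sequence `s` in `B(G₀)`: the number of atoms in
factorizations of `s` into atoms of `B(G₀)`. -/
def zsSetOfLengths {G : Type*} [CommGroup G] (G₀ : Set G) (s : Multiset G) : Set ℕ :=
  {k | ∃ f : Multiset (Multiset G), Multiset.card f = k ∧
    (∀ t ∈ f, IsZeroSumAtom G₀ t) ∧ f.sum = s}

/-- The set of distances `Δ(B(G₀))` of the monoid of zero-sum sequences over `G₀`. -/
def zsDelta {G : Type*} [CommGroup G] (G₀ : Set G) : Set ℤ :=
  ⋃ s ∈ {s : Multiset G | IsZeroSumSeq G₀ s},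
    setDistances ((fun k : ℕ => (k : ℤ)) '' zsSetOfLengths G₀ s)

/-- The set of minimal distances `Δ*(G) = {min Δ(B(G₀)) | G₀ ⊆ G, Δ(B(G₀)) ≠ ∅}`. -/
def deltaStar (G : Type*) [CommGroup G] : Set ℤ :=
  {d | ∃ G₀ : Set G, IsLeast (zsDelta G₀) d}

/-- `L` is an almost arithmetic multiprogression (AAMP) with difference `d` and bound `N`:
`L = y + (L' ∪ L* ∪ L'') ⊆ y + 𝒟 + dℤ` where `{0, d} ⊆ 𝒟 ⊆ [0, d]`, `min L* = 0`,
`L* = (𝒟 + dℤ) ∩ [0, max L*]`, `L' ⊆ [-N, -1]` and `L'' ⊆ max L* + [1, N]`. -/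
def IsAAMP (L : Set ℤ) (d : ℤ) (N : ℕ) : Prop :=
  ∃ (y : ℤ) (𝒟 L' Lstar L'' : Set ℤ) (m : ℤ),
    {0, d} ⊆ 𝒟 ∧ 𝒟 ⊆ Set.Icc 0 d ∧
    L = (fun x => y + x) '' (L' ∪ Lstar ∪ L'') ∧
    L' ∪ Lstar ∪ L'' ⊆ {x | ∃ a ∈ 𝒟, ∃ k : ℤ, x = a + d * k} ∧
    IsLeast Lstar 0 ∧ IsGreatest Lstar m ∧
    Lstar = {x | (∃ a ∈ 𝒟, ∃ k : ℤ, x = a + d * k) ∧ 0 ≤ x ∧ x ≤ m} ∧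
    L' ⊆ Set.Icc (-(N : ℤ)) (-1) ∧
    L'' ⊆ Set.Icc (m + 1) (m + N)

set_option linter.unusedSectionVars false

namespace AAMPProof

open Multiset

section ZS

variable {G : Type*} [CommGroup G]

/-- atoms of `B(G)` -/
def At (s : Multiset G) : Prop := IsZeroSumAtom Set.univ s

/-- lengths in `B(G)` -/
def Ln (s : Multiset G) : Set ℕ := zsSetOfLengths Set.univ s

lemma At.prod {s : Multiset G} (h : At s) : s.prod = 1 := h.1.2

lemma At.ne_zero {s : Multiset G} (h : At s) : s ≠ 0 := h.2.1

lemma At.split {s t u : Multiset G} (h : At s) (ht : t.prod = 1) (hu : u.prod = 1)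
    (e : s = t + u) : t = 0 ∨ u = 0 := by
  by_contra! hc
  exact h.2.2 t u ⟨fun _ _ => trivial, ht⟩ ⟨fun _ _ => trivial, hu⟩ hc.1 hc.2 e

lemma at_iff {s : Multiset G} : At s ↔ s.prod = 1 ∧ s ≠ 0 ∧
    ∀ t u : Multiset G, t.prod = 1 → u.prod = 1 → s = t + u → t = 0 ∨ u = 0 := by
  constructor
  · intro h
    exact ⟨h.prod, h.ne_zero, fun t u ht hu e => h.split ht hu e⟩
  · rintro ⟨h1, h2, h3⟩
    refine ⟨⟨fun _ _ => trivial, h1⟩, h2, fun t u ht hu h4 h5 e => ?_⟩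
    rcases h3 t u ht.2 hu.2 e with h | h
    · exact h4 h
    · exact h5 h

lemma mem_Ln {s : Multiset G} {k : ℕ} :
    k ∈ Ln s ↔ ∃ f : Multiset (Multiset G), card f = k ∧ (∀ t ∈ f, At t) ∧ f.sum = s := Iff.rfl

/-- atoms of `B(G₀)` are atoms of `B(G)` -/
lemma atom_iff {G₀ : Set G} {s : Multiset G} (hs : ∀ g ∈ s, g ∈ G₀) :
    IsZeroSumAtom G₀ s ↔ At s := by
  rw [at_iff]
  constructor
  · rintro ⟨h1, h2, h3⟩
    refine ⟨h1.2, h2, fun t u ht hu e => ?_⟩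
    by_contra! hc
    refine h3 t u ⟨fun g hg => hs g ?_, ht⟩ ⟨fun g hg => hs g ?_, hu⟩ hc.1 hc.2 e
    · rw [e]; exact mem_add.2 (Or.inl hg)
    · rw [e]; exact mem_add.2 (Or.inr hg)
  · rintro ⟨h1, h2, h3⟩
    refine ⟨⟨hs, h1⟩, h2, fun t u ht hu h4 h5 e => ?_⟩
    rcases h3 t u ht.2 hu.2 e with h | h
    · exact h4 h
    · exact h5 h

lemma le_msum {f : Multiset (Multiset G)} {t : Multiset G} (h : t ∈ f) : t ≤ f.sum :=
  Multiset.single_le_sum (fun _ _ => zero_le) _ h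

lemma zs_eq {G₀ : Set G} {s : Multiset G} (hs : ∀ g ∈ s, g ∈ G₀) :
    zsSetOfLengths G₀ s = Ln s := by
  ext k
  rw [mem_Ln]
  constructor
  · rintro ⟨f, h1, h2, h3⟩
    refine ⟨f, h1, fun t ht => (atom_iff ?_).1 (h2 t ht), h3⟩
    intro g hg
    exact hs g (h3 ▸ mem_of_le (le_msum ht) hg)
  · rintro ⟨f, h1, h2, h3⟩
    refine ⟨f, h1, fun t ht => (atom_iff ?_).2 (h2 t ht), h3⟩
    intro g hg
    exact hs g (h3 ▸ mem_of_le (le_msum ht) hg)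

lemma Ln_add {s t : Multiset G} {a b : ℕ} (ha : a ∈ Ln s) (hb : b ∈ Ln t) :
    a + b ∈ Ln (s + t) := by
  rw [mem_Ln] at *
  obtain ⟨f, h1, h2, h3⟩ := ha
  obtain ⟨f', h1', h2', h3'⟩ := hb
  refine ⟨f + f', by simp [h1, h1'], ?_, by simp [h3, h3']⟩
  intro t ht
  rcases mem_add.1 ht with h | h
  · exact h2 t h
  · exact h2' t h

lemma Ln_zero : 0 ∈ Ln (0 : Multiset G) := ⟨0, by simp⟩

lemma Ln_atom {s : Multiset G} (h : At s) : 1 ∈ Ln s := by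
  refine ⟨{s}, by simp, ?_, by simp⟩
  intro t ht
  rw [mem_singleton] at ht
  subst ht
  exact h

lemma prod_sum_eq_one {f : Multiset (Multiset G)} (h : ∀ t ∈ f, At t) : f.sum.prod = 1 := by
  induction f using Multiset.induction_on with
  | empty => simp
  | cons a f ih =>
    rw [sum_cons, prod_add, (h a (mem_cons_self a f)).prod,
      ih (fun t ht => h t (mem_cons_of_mem ht)), one_mul]

lemma Ln_prod {s : Multiset G} {a : ℕ} (ha : a ∈ Ln s) : s.prod = 1 := by
  obtain ⟨f, h1, h2, h3⟩ := ha
  rw [← h3]; exact prod_sum_eq_one h2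

lemma card_le_sum {f : Multiset (Multiset G)} (h : ∀ t ∈ f, At t) : card f ≤ card f.sum := by
  induction f using Multiset.induction_on with
  | empty => simp
  | cons a f ih =>
    rw [sum_cons, card_cons, card_add]
    have := card_pos.2 (h a (mem_cons_self a f)).ne_zero
    have := ih (fun t ht => h t (mem_cons_of_mem ht))
    omega

lemma sum_card_le {D : ℕ} {f : Multiset (Multiset G)} (h : ∀ t ∈ f, card t ≤ D) :
    card f.sum ≤ D * card f := by
  induction f using Multiset.induction_on with
  | empty => simp
  | cons a f ih =>
    rw [sum_cons, card_cons, card_add]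
    have := h a (mem_cons_self a f)
    have := ih (fun t ht => h t (mem_cons_of_mem ht))
    linarith

lemma Ln_le {s : Multiset G} {a : ℕ} (ha : a ∈ Ln s) : a ≤ card s := by
  obtain ⟨f, h1, h2, h3⟩ := ha
  rw [← h3, ← h1]; exact card_le_sum h2

lemma exists_Ln (s : Multiset G) (hs : s.prod = 1) : ∃ a, a ∈ Ln s := by
  induction hn : card s using Nat.strong_induction_on generalizing s with
  | _ n ih =>
    by_cases h0 : s = 0
    · subst h0; exact ⟨0, Ln_zero⟩
    by_cases hat : At s
    · exact ⟨1, Ln_atom hat⟩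
    · rw [at_iff] at hat
      push Not at hat
      obtain ⟨t, u, ht, hu, e, ht0, hu0⟩ := hat hs h0
      have h1 := card_pos.2 ht0
      have h2 := card_pos.2 hu0
      have h3 : card s = card t + card u := by rw [e, card_add]
      obtain ⟨a, ha⟩ := ih (card t) (by omega) t ht rfl
      obtain ⟨b, hb⟩ := ih (card u) (by omega) u hu rfl
      exact ⟨a + b, e ▸ Ln_add ha hb⟩

lemma atom_card_le [Finite G] {s : Multiset G} (hs : At s) :
    card s ≤ Nat.card G * Nat.card G := by
  classical
  have := Fintype.ofFinite G
  have hc : ∀ g, count g s ≤ Nat.card G := by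
    intro g
    by_contra! hlt
    have hle : replicate (Nat.card G) g ≤ s := le_count_iff_replicate_le.1 hlt.le
    obtain ⟨u, hu⟩ := Multiset.le_iff_exists_add.1 hle
    have hp : (replicate (Nat.card G) g).prod = 1 := by simp
    have hup : u.prod = 1 := by
      have := hs.prod
      rw [hu, prod_add, hp, one_mul] at this
      exact this
    rcases hs.split hp hup hu with h | h
    · have := congrArg card h
      simp at this
    · rw [h, add_zero] at hu
      rw [hu] at hlt
      simp at hlt
  rw [← Multiset.sum_count_eq_card (s := Finset.univ) (fun a _ => Finset.mem_univ a)]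
  calc ∑ a, count a s ≤ ∑ a : G, Nat.card G := Finset.sum_le_sum (fun a _ => hc a)
    _ = _ := by simp

/-- covering lemma -/
lemma cover [DecidableEq G] (W : Multiset G) (z : Multiset (Multiset G)) (h : W ≤ z.sum) :
    ∃ x ≤ z, card x ≤ card W ∧ W ≤ x.sum := by
  induction z using Multiset.induction_on generalizing W with
  | empty => exact ⟨0, le_rfl, by simp, by simpa using h⟩
  | cons t z ih =>
    rw [sum_cons] at h
    by_cases hd : W ≤ z.sum
    · obtain ⟨x, h1, h2, h3⟩ := ih W hd
      exact ⟨x, h1.trans (le_cons_self z t), h2, h3⟩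
    · obtain ⟨x, h1, h2, h3⟩ := ih (W - t) (by rw [tsub_le_iff_left]; exact h)
      refine ⟨t ::ₘ x, cons_le_cons t h1, ?_, ?_⟩
      · have : W - t ≤ W := tsub_le_self
        have hne : W - t ≠ W := by
          intro e
          apply hd
          rw [← e, tsub_le_iff_left]; exact h
        have := card_lt_card (lt_of_le_of_ne this hne)
        rw [card_cons]; omega
      · rw [sum_cons, ← tsub_le_iff_left]; exact h3

/-- covering in a factorization, complement form -/
lemma cover' {s W : Multiset G} {k : ℕ} (hk : k ∈ Ln s) (hW : W ≤ s) :
    ∃ x y : Multiset (Multiset G), (∀ t ∈ x, At t) ∧ (∀ t ∈ y, At t) ∧ card x + card y = k ∧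
      x.sum + y.sum = s ∧ card x ≤ card W ∧ W ≤ x.sum := by
  classical
  obtain ⟨z, h1, h2, h3⟩ := hk
  obtain ⟨x, hx, hc, hw⟩ := cover W z (h3 ▸ hW)
  obtain ⟨y, rfl⟩ := Multiset.le_iff_exists_add.1 hx
  refine ⟨x, y, fun t ht => h2 t (mem_add.2 (Or.inl ht)), fun t ht => h2 t (mem_add.2 (Or.inr ht)),
    by rw [← h1, card_add], by rw [← h3, sum_add], hc, hw⟩

lemma prod_right {s t u : Multiset G} (e : s = t + u) (hs : s.prod = 1) (ht : t.prod = 1) :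
    u.prod = 1 := by
  rw [e, prod_add, ht, one_mul] at hs
  exact hs

/-- bounded gaps -/
lemma gaps {D : ℕ} (hD : ∀ s : Multiset G, At s → card s ≤ D) (n : ℕ) :
    ∀ s : Multiset G, card s ≤ n → ∀ p a b : ℕ, a ∈ Ln s → b ∈ Ln s → a ≤ p → p < b →
      ∃ c ∈ Ln s, p < c ∧ c ≤ p + (D * D + 1) := by
  induction n with
  | zero =>
    intro s hs p a b ha hb h1 h2
    have := Ln_le hb
    omega
  | succ n ih =>
    intro s hs p a b ha hb h1 h2
    obtain ⟨z', h1', h2', h3'⟩ := hb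
    have hz : z' ≠ 0 := by rintro rfl; simp at h1'; omega
    obtain ⟨u, hu⟩ := exists_mem_of_ne_zero hz
    obtain ⟨w', rfl⟩ := exists_cons_of_mem hu
    have huat : At u := h2' u hu
    have hs' : s = u + w'.sum := by rw [← h3', sum_cons]
    obtain ⟨x, y, hx, hy, hxy, hsum, hcx, hux⟩ := cover' (W := u) ha
      (by rw [hs']; exact Multiset.le_add_right _ _)
    obtain ⟨v, hv⟩ := Multiset.le_iff_exists_add.1 hux
    have hvp : v.prod = 1 := prod_right hv (prod_sum_eq_one hx) huat.prod
    obtain ⟨j, hj⟩ := exists_Ln v hvp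
    have hjc : j ≤ D * D := by
      have a1 := Ln_le hj
      have a2 : card v ≤ card x.sum := by rw [hv, card_add]; omega
      have a3 := sum_card_le (D := D) (fun t ht => hD t (hx t ht))
      have a4 := Nat.mul_le_mul_left D (hcx.trans (hD u huat))
      omega
    have hyL : card y ∈ Ln y.sum := ⟨y, rfl, hy, rfl⟩
    have hw : j + card y ∈ Ln w'.sum := by
      have e : w'.sum = v + y.sum := by
        rw [hs', hv, add_assoc] at hsum
        exact (add_left_cancel hsum).symm
      rw [e]; exact Ln_add hj hyL
    have huL : 1 ∈ Ln u := Ln_atom huat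
    by_cases hlt : p < 1 + (j + card y)
    · refine ⟨1 + (j + card y), ?_, hlt, by omega⟩
      rw [hs']; exact Ln_add huL hw
    · have hcu := card_pos.2 huat.ne_zero
      have hcs : card s = card u + card w'.sum := by rw [hs', card_add]
      rw [card_cons] at h1'
      obtain ⟨c, hc, hc1, hc2⟩ := ih w'.sum (by omega) (p - 1) (j + card y) (card w') hw
        ⟨w', rfl, fun t ht => h2' t (mem_cons_of_mem ht), rfl⟩ (by omega) (by omega)
      refine ⟨1 + c, ?_, by omega, by omega⟩
      rw [hs']; exact Ln_add huL hc

/-- perturbation lemma -/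
lemma pert {D : ℕ} (hD : ∀ s : Multiset G, At s → card s ≤ D) {B V T : Multiset G}
    (e : B = V + T) (hT : T.prod = 1) {k : ℕ} (hk : k ∈ Ln B) :
    ∃ t ∈ Ln T, k ≤ t + card V ∧ t ≤ k + D * card V := by
  obtain ⟨x, y, hx, hy, hxy, hsum, hcx, hVx⟩ := cover' (W := V) hk
    (by rw [e]; exact Multiset.le_add_right _ _)
  obtain ⟨v, hv⟩ := Multiset.le_iff_exists_add.1 hVx
  have e2 : T = v + y.sum := by
    rw [e, hv, add_assoc] at hsum
    exact (add_left_cancel hsum).symm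
  have hvp : v.prod = 1 := by
    have := hT
    rw [e2, prod_add, prod_sum_eq_one hy, mul_one] at this
    exact this
  obtain ⟨j, hj⟩ := exists_Ln v hvp
  have hjc : j ≤ D * card V := by
    have a1 := Ln_le hj
    have a2 : card v ≤ card x.sum := by rw [hv, card_add]; omega
    have a3 := sum_card_le (D := D) (fun t ht => hD t (hx t ht))
    have a4 := Nat.mul_le_mul_left D hcx
    omega
  refine ⟨j + card y, ?_, by omega, by omega⟩
  rw [e2]; exact Ln_add hj ⟨y, rfl, hy, rfl⟩

/-- the group of differences of lengths -/
def diffs (G₀ : Set G) : AddSubgroup ℤ where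
  carrier := {n | ∃ T : Multiset G, (∀ g ∈ T, g ∈ G₀) ∧ ∃ a ∈ Ln T, ∃ b ∈ Ln T, n = (a : ℤ) - b}
  zero_mem' := ⟨0, by simp, 0, Ln_zero, 0, Ln_zero, by simp⟩
  add_mem' := by
    rintro _ _ ⟨T, hT, a, ha, b, hb, rfl⟩ ⟨T', hT', a', ha', b', hb', rfl⟩
    refine ⟨T + T', ?_, a + a', Ln_add ha ha', b + b', Ln_add hb hb', by push_cast; ring⟩
    intro g hg
    rcases mem_add.1 hg with h | h
    · exact hT g h
    · exact hT' g h
  neg_mem' := by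
    rintro _ ⟨T, hT, a, ha, b, hb, rfl⟩
    exact ⟨T, hT, b, hb, a, ha, by ring⟩

lemma mem_diffs {G₀ : Set G} {n : ℤ} : n ∈ diffs G₀ ↔
  ∃ T : Multiset G, (∀ g ∈ T, g ∈ G₀) ∧ ∃ a ∈ Ln T, ∃ b ∈ Ln T, n = (a : ℤ) - b := Iff.rfl

lemma exists_gen (G₀ : Set G) (h : diffs G₀ ≠ ⊥) :
    ∃ d : ℕ, 0 < d ∧ (d : ℤ) ∈ diffs G₀ ∧ ∀ n ∈ diffs G₀, (d : ℤ) ∣ n := by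
  obtain ⟨a, ha⟩ := Int.subgroup_cyclic (diffs G₀)
  refine ⟨a.natAbs, ?_, ?_, ?_⟩
  · rw [Int.natAbs_pos]
    rintro rfl
    apply h
    rw [ha]; simp
  · have haa : a ∈ diffs G₀ := by rw [ha]; exact AddSubgroup.subset_closure rfl
    rcases Int.natAbs_eq a with e | e
    · rw [← e]; exact haa
    · have := (diffs G₀).neg_mem haa
      rw [e] at this
      simpa using this
  · intro n hn
    rw [ha, AddSubgroup.mem_closure_singleton] at hn
    obtain ⟨k, rfl⟩ := hn
    rw [Int.natAbs_dvd]
    exact ⟨k, by simp [mul_comm]⟩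

lemma gen_mem_deltaStar (G₀ : Set G) {d : ℕ} (hd : 0 < d) (h1 : (d : ℤ) ∈ diffs G₀)
    (h2 : ∀ n ∈ diffs G₀, (d : ℤ) ∣ n) : (d : ℤ) ∈ deltaStar G := by
  refine ⟨G₀, ?_, ?_⟩
  · obtain ⟨T, hT, a, ha, b, hb, e⟩ := h1
    simp only [zsDelta, Set.mem_iUnion]
    refine ⟨T, ⟨hT, Ln_prod ha⟩, b, ⟨b, ?_, rfl⟩, a, ⟨a, ?_, rfl⟩, by omega, e.symm, ?_⟩
    · rw [zs_eq hT]; exact hb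
    · rw [zs_eq hT]; exact ha
    · rintro _ ⟨c, hc, rfl⟩ ⟨hlt, hlt'⟩
      rw [zs_eq hT] at hc
      have := h2 _ ⟨T, hT, c, hc, b, hb, rfl⟩
      simp only at hlt hlt'
      have := Int.le_of_dvd (by omega) this
      omega
  · intro e he
    simp only [zsDelta, Set.mem_iUnion] at he
    obtain ⟨T, hT, _, ⟨b, hb, rfl⟩, _, ⟨a, ha, rfl⟩, hlt, rfl, -⟩ := he
    rw [zs_eq hT.1] at ha hb
    simp only at hlt ⊢
    exact Int.le_of_dvd (by omega) (h2 _ ⟨T, hT.1, a, ha, b, hb, rfl⟩)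

/-- multiples of `C` have long progressions -/
lemma multiples {C : Multiset G} {m d : ℕ} (h0 : m ∈ Ln C) (h1 : m + d ∈ Ln C) (q : ℕ) :
    ∀ j ≤ q, q * m + j * d ∈ Ln (q • C) := by
  induction q with
  | zero => intro j hj; obtain rfl : j = 0 := by omega
            simpa using Ln_zero
  | succ q ih =>
    intro j hj
    rw [succ_nsmul]
    by_cases hjq : j ≤ q
    · have := Ln_add (ih j hjq) h0
      convert this using 1; ring
    · obtain rfl : j = q + 1 := by omega
      have := Ln_add (ih q le_rfl) h1
      convert this using 1; ring

end ZS

section Arith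

lemma aamp_mono {L : Set ℤ} {d : ℤ} {N N' : ℕ} (h : N ≤ N') (hL : IsAAMP L d N) :
    IsAAMP L d N' := by
  obtain ⟨y, 𝒟, L', Ls, L'', m, h1, h2, h3, h4, h5, h6, h7, h8, h9⟩ := hL
  refine ⟨y, 𝒟, L', Ls, L'', m, h1, h2, h3, h4, h5, h6, h7, h8.trans ?_, h9.trans ?_⟩
  · exact Set.Icc_subset_Icc (by omega) le_rfl
  · exact Set.Icc_subset_Icc le_rfl (by omega)

/-- a set of bounded diameter is an AAMP for any positive difference -/
lemma aamp_small {L : Set ℤ} {d : ℤ} (hd : 0 < d) {N : ℕ} {a b : ℤ} (ha : IsLeast L a)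
    (hb : ∀ x ∈ L, x ≤ b) (hN : b ≤ a + N) : IsAAMP L d N := by
  have hall : ∀ x : ℤ, ∃ r ∈ Set.Icc 0 d, ∃ k : ℤ, x = r + d * k := fun x =>
    ⟨x % d, ⟨Int.emod_nonneg _ hd.ne', (Int.emod_lt_of_pos _ hd).le⟩, x / d,
      (Int.emod_add_mul_ediv x d).symm⟩
  refine ⟨a, Set.Icc 0 d, ∅, {0}, {x | 0 < x ∧ a + x ∈ L}, 0, ?_, le_rfl, ?_, ?_, ?_, ?_, ?_, ?_, ?_⟩
  · rintro x (rfl | rfl)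
    · exact ⟨le_rfl, hd.le⟩
    · exact ⟨hd.le, le_rfl⟩
  · ext x
    simp only [Set.empty_union, Set.mem_image, Set.mem_union, Set.mem_singleton_iff,
      Set.mem_ofPred_eq]
    constructor
    · intro hx
      have := ha.2 hx
      refine ⟨x - a, ?_, by ring⟩
      rcases this.eq_or_lt with h | h
      · left; omega
      · right; exact ⟨by omega, by simpa using hx⟩
    · rintro ⟨t, rfl | ht, rfl⟩
      · simpa using ha.1
      · exact ht.2
  · intro x _; exact hall x
  · simp
  · simp
  · ext x
    simp only [Set.mem_singleton_iff, Set.mem_ofPred_eq]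
    constructor
    · rintro rfl; exact ⟨hall 0, le_rfl, le_rfl⟩
    · rintro ⟨-, h1, h2⟩; omega
  · simp
  · rintro x ⟨h1, h2⟩
    have := hb _ h2
    exact ⟨by omega, by omega⟩

lemma aamp_main {L : Set ℤ} {d c : ℕ} (hd : 0 < d) {a b : ℤ} (ha : IsLeast L a)
    (hb : IsGreatest L b)
    (hstar : ∀ l₀ ∈ L, ∀ l : ℤ, (d : ℤ) ∣ l - l₀ → a + c ≤ l → l ≤ b - c → l ∈ L) :
    IsAAMP L d (c * d + c + d) := by
  have hd' : (0 : ℤ) < d := by exact_mod_cast hd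
  have hcd : (c : ℤ) ≤ c * d := by nlinarith
  by_cases hsmall : b ≤ a + (c * d + c + d : ℕ)
  · exact aamp_small hd' ha (fun x hx => hb.2 hx) hsmall
  push_cast at hsmall
  set y : ℤ := a + c * d with hy
  have hyL : y ∈ L := hstar a ha.1 y ⟨c, by rw [hy]; ring⟩ (by omega) (by omega)
  set k : ℤ := (b - c - y) / d with hk
  have hk1 : d * k ≤ b - c - y := Int.mul_ediv_self_le hd'.ne'
  have hk2 : b - c - y < d * k + d := Int.lt_mul_ediv_self_add hd'
  have hk0 : 0 ≤ d * k := mul_nonneg hd'.le (Int.ediv_nonneg (by omega) hd'.le)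
  set 𝒟 : Set ℤ := {x | 0 ≤ x ∧ x ≤ d ∧ ∃ l ∈ L, (d : ℤ) ∣ y + x - l} with h𝒟
  have h0D : (0 : ℤ) ∈ 𝒟 := ⟨le_rfl, hd'.le, y, hyL, by simp⟩
  have hmem : ∀ l ∈ L, ∃ r ∈ 𝒟, ∃ j : ℤ, l - y = r + d * j := by
    intro l hl
    refine ⟨(l - y) % d, ⟨Int.emod_nonneg _ hd'.ne', (Int.emod_lt_of_pos _ hd').le, l, hl, ?_⟩,
      (l - y) / d, (Int.emod_add_mul_ediv _ _).symm⟩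
    refine ⟨-((l - y) / d), ?_⟩
    have := Int.emod_add_mul_ediv (l - y) d
    linarith
  have hconv : ∀ x : ℤ, (∃ r ∈ 𝒟, ∃ j : ℤ, x = r + d * j) → 0 ≤ x → x ≤ d * k → y + x ∈ L := by
    rintro x ⟨r, ⟨-, -, l, hl, e, he⟩, j, rfl⟩ h1 h2
    refine hstar l hl _ ⟨e + j, ?_⟩ (by omega) (by omega)
    linear_combination he
  refine ⟨y, 𝒟, {x | x < 0 ∧ y + x ∈ L}, {x | (0 ≤ x ∧ x ≤ d * k) ∧ y + x ∈ L},
    {x | d * k < x ∧ y + x ∈ L}, d * k, ?_, ?_, ?_, ?_, ?_, ?_, ?_, ?_, ?_⟩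
  · rintro x (rfl | rfl)
    · exact h0D
    · exact ⟨hd'.le, le_rfl, y, hyL, by simp⟩
  · rintro x ⟨h1, h2, -⟩; exact ⟨h1, h2⟩
  · ext x
    simp only [Set.mem_image, Set.mem_union, Set.mem_ofPred_eq]
    constructor
    · intro hx
      have hx' : y + (x - y) ∈ L := by simpa using hx
      refine ⟨x - y, ?_, by ring⟩
      rcases lt_or_ge (x - y) 0 with h | h
      · exact Or.inl (Or.inl ⟨h, hx'⟩)
      · rcases le_or_gt (x - y) (d * k) with h2 | h2
        · exact Or.inl (Or.inr ⟨⟨h, h2⟩, hx'⟩)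
        · exact Or.inr ⟨h2, hx'⟩
    · rintro ⟨t, (ht | ht) | ht, rfl⟩ <;> exact ht.2
  · intro x hx
    have hx' : y + x ∈ L := by
      rcases hx with (ht | ht) | ht <;> exact ht.2
    have := hmem _ hx'
    simpa using this
  · refine ⟨⟨⟨le_rfl, hk0⟩, by simpa using hyL⟩, fun x hx => hx.1.1⟩
  · exact ⟨⟨⟨hk0, le_rfl⟩, hconv _ ⟨0, h0D, k, by ring⟩ hk0 le_rfl⟩, fun x hx => hx.1.2⟩
  · ext x
    constructor
    · rintro ⟨⟨h1, h2⟩, h3⟩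
      have := hmem _ h3
      exact ⟨by simpa using this, h1, h2⟩
    · rintro ⟨h1, h2, h3⟩
      exact ⟨⟨h2, h3⟩, hconv x h1 h2 h3⟩
  · rintro x ⟨h1, h2⟩
    have := ha.2 h2
    refine ⟨?_, by omega⟩
    push_cast; omega
  · rintro x ⟨h1, h2⟩
    have := hb.2 h2
    refine ⟨by omega, ?_⟩
    push_cast; omega

end Arith

section Core

variable {G : Type*} [CommGroup G]

lemma exists_extrema {B : Multiset G} (hB : B.prod = 1) :
    ∃ a ∈ Ln B, ∃ b ∈ Ln B, (∀ k ∈ Ln B, a ≤ k ∧ k ≤ b) := by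
  have hfin : (Ln B).Finite := (Set.finite_Iic (card B)).subset (fun k hk => Ln_le hk)
  have hne : (Ln B).Nonempty := exists_Ln B hB
  obtain ⟨a, ha, ha'⟩ := Set.exists_min_image (Ln B) id hfin hne
  obtain ⟨b, hb, hb'⟩ := Set.exists_max_image (Ln B) id hfin hne
  exact ⟨a, ha, b, hb, fun k hk => ⟨ha' k hk, hb' k hk⟩⟩

lemma card_filter_le [Finite G] (G₀ : Set G) (K : ℕ) (B : Multiset G)
    (h : ∀ g ∉ G₀, ∀ [DecidableEq G], count g B ≤ K) [DecidablePred (· ∉ G₀)] :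
    card (B.filter (· ∉ G₀)) ≤ Nat.card G * K := by
  classical
  have := Fintype.ofFinite G
  rw [← Multiset.sum_count_eq_card (s := Finset.univ) (fun a _ => Finset.mem_univ a)]
  calc ∑ a, count a (B.filter (· ∉ G₀)) ≤ ∑ a : G, K := by
        refine Finset.sum_le_sum (fun a _ => ?_)
        rw [count_filter]
        by_cases hh : a ∈ G₀
        · simp [hh]
        · simpa [hh] using h a hh
    _ = _ := by simp

/-- splitting a factorization along `G₀` -/
lemma split_off [Finite G] {D : ℕ} (hD : ∀ s : Multiset G, At s → card s ≤ D)
    (G₀ : Set G) (K : ℕ) (B : Multiset G)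
    (h : ∀ g ∉ G₀, ∀ [DecidableEq G], count g B ≤ K) {k : ℕ} (hk : k ∈ Ln B) :
    ∃ (X T : Multiset G) (i j : ℕ), B = X + T ∧ i ∈ Ln X ∧ j ∈ Ln T ∧ i + j = k ∧
      (∀ g ∈ T, g ∈ G₀) ∧ i ≤ Nat.card G * K ∧ card X ≤ D * (Nat.card G * K) := by
  classical
  obtain ⟨x, y, hx, hy, hxy, hsum, hcx, hWx⟩ := cover' (W := B.filter (· ∉ G₀)) hk (filter_le _ _)
  have hc := card_filter_le G₀ K B h
  refine ⟨x.sum, y.sum, card x, card y, hsum.symm, ⟨x, rfl, hx, rfl⟩, ⟨y, rfl, hy, rfl⟩, hxy, ?_,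
    hcx.trans hc, ?_⟩
  · intro g hg
    by_contra hn
    have h1 := count_le_of_le g hWx
    rw [count_filter_of_pos (p := (· ∉ G₀)) hn, ← hsum, count_add] at h1
    have := count_pos.2 hg
    omega
  · exact (sum_card_le (D := D) (fun t ht => hD t (hx t ht))).trans
      (Nat.mul_le_mul_left D (hcx.trans hc))

lemma core [Finite G] (hne : ∃ d : ℕ, 0 < d ∧ (d : ℤ) ∈ deltaStar G) (G₀ : Set G) (K : ℕ) :
    ∃ K' N : ℕ, ∀ B : Multiset G, B.prod = 1 →
      (∀ g ∉ G₀, ∀ [DecidableEq G], count g B ≤ K) →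
      (∀ g ∈ G₀, ∀ [DecidableEq G], K' ≤ count g B) →
      ∃ d ∈ deltaStar G, IsAAMP ((fun k : ℕ => (k : ℤ)) '' Ln B) d N := by
  classical
  obtain ⟨D, hD⟩ : ∃ D : ℕ, ∀ s : Multiset G, At s → card s ≤ D :=
    ⟨_, fun s hs => atom_card_le hs⟩
  set E₀ := Nat.card G * K with hE₀
  by_cases hbot : diffs G₀ = ⊥
  · -- half-factorial case
    obtain ⟨d, hd, hdm⟩ := hne
    refine ⟨0, D * E₀, fun B hB h1 h2 => ⟨d, hdm, ?_⟩⟩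
    obtain ⟨a, ha, b, hb, hab⟩ := exists_extrema hB
    refine aamp_small (by exact_mod_cast hd) (a := a) (b := b) ⟨⟨a, ha, rfl⟩, ?_⟩ ?_ ?_
    · rintro _ ⟨k, hk, rfl⟩
      exact Int.ofNat_le.2 (hab k hk).1
    · rintro _ ⟨k, hk, rfl⟩
      exact Int.ofNat_le.2 (hab k hk).2
    · obtain ⟨X, T, i, j, e, hi, hj, hij, hT, hi', hX⟩ := split_off hD G₀ K B h1 ha
      rw [← hE₀] at hX hi'
      obtain ⟨t, ht, ht1, ht2⟩ := pert hD e (Ln_prod hj) hb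
      have : (t : ℤ) - j ∈ diffs G₀ := ⟨T, hT, t, ht, j, hj, rfl⟩
      rw [hbot, AddSubgroup.mem_bot] at this
      have hh : b ≤ a + D * E₀ := by omega
      exact_mod_cast hh
  · obtain ⟨d, hd, hdm, hdvd⟩ := exists_gen G₀ hbot
    have hdS := gen_mem_deltaStar G₀ hd hdm hdvd
    obtain ⟨C, hC, m', hm', m, hm, hmm⟩ := hdm
    obtain rfl : m' = m + d := by omega
    set M := D * D + 1 with hM
    set e₀ := D * E₀ + M * card C with he₀
    set c := E₀ + M * m + M + D * e₀ + e₀ with hc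
    refine ⟨D * E₀ + M * card C, c * d + c + d, fun B hB h1 h2 => ⟨d, hdS, ?_⟩⟩
    obtain ⟨a, ha, b, hb, hab⟩ := exists_extrema hB
    refine aamp_main hd (a := a) (b := b) ⟨⟨a, ha, rfl⟩, ?_⟩ ⟨⟨b, hb, rfl⟩, ?_⟩ ?_
    · rintro _ ⟨k, hk, rfl⟩
      exact Int.ofNat_le.2 (hab k hk).1
    · rintro _ ⟨k, hk, rfl⟩
      exact Int.ofNat_le.2 (hab k hk).2
    rintro _ ⟨l₀, hl₀, rfl⟩ l hdl hl1 hl2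
    obtain ⟨l, rfl⟩ : ∃ n : ℕ, l = n := ⟨l.toNat, by omega⟩
    refine ⟨l, ?_, rfl⟩
    have hl1' : a + c ≤ l := by exact_mod_cast hl1
    have hl2' : l + c ≤ b := by omega
    obtain ⟨X, T, i, j, e, hi, hj, hij, hT, hi', hX⟩ := split_off hD G₀ K B h1 hl₀
    rw [← hE₀] at hX hi'
    have hMC : M • C ≤ T := by
      rw [le_iff_count]
      intro g
      by_cases hg : g ∈ G₀
      · have a1 := h2 g hg
        rw [e, count_add] at a1
        have a2 := count_le_card g X
        have a3 := Nat.mul_le_mul_left M (count_le_card g C)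
        rw [count_nsmul]
        omega
      · rw [count_nsmul, count_eq_zero_of_notMem (fun h => hg (hC g h))]
        simp
    obtain ⟨T', hT'⟩ := Multiset.le_iff_exists_add.1 hMC
    have hMCL := multiples hm hm' M
    have hT'p : T'.prod = 1 := prod_right hT' (Ln_prod hj) (Ln_prod (hMCL 0 (Nat.zero_le _)))
    have eB : B = (X + M • C) + T' := by rw [e, hT', add_assoc]
    have hcV : card (X + M • C) ≤ e₀ := by rw [card_add, card_nsmul]; omega
    have hcV' := Nat.mul_le_mul_left D hcV
    obtain ⟨p, hp, hp1, hp2⟩ := pert hD eB hT'p ha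
    obtain ⟨P, hP, hP1, hP2⟩ := pert hD eB hT'p hb
    obtain ⟨t, ht, ht1, ht2⟩ := gaps hD _ T' le_rfl (l - i - M * m - M) p P hp hP
      (by omega) (by omega)
    have hdiff : (d : ℤ) ∣ ((M * m + 0 * d + t : ℕ) : ℤ) - j := by
      refine hdvd _ ⟨T, hT, _, ?_, j, hj, rfl⟩
      rw [hT']; exact Ln_add (hMCL 0 (Nat.zero_le _)) ht
    have hle : i + M * m + t ≤ l := by omega
    have hlt : l - (i + M * m + t) ≤ M := by omega
    obtain ⟨r, hr⟩ : d ∣ l - (i + M * m + t) := by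
      zify [hle]
      have := dvd_sub hdl hdiff
      have e4 : (l : ℤ) - (i + M * m + t) =
          (l : ℤ) - (l₀ : ℤ) - (((M * m + 0 * d + t : ℕ) : ℤ) - j) := by
        rw [← hij]
        push_cast
        ring
      rw [e4]
      exact this
    have hrM : r ≤ M := by
      have : r ≤ d * r := Nat.le_mul_of_pos_left r hd
      omega
    have hfin := Ln_add hi (Ln_add (hMCL r hrM) ht)
    rw [← hT', ← e] at hfin
    convert hfin using 1
    have : r * d = d * r := mul_comm _ _
    omega

lemma zs_aamp_aux [Finite G] (hne : ∃ d : ℕ, 0 < d ∧ (d : ℤ) ∈ deltaStar G) (n : ℕ) :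
    ∀ (G₀ : Set G), G₀.ncard ≤ n → ∀ K : ℕ,
    ∃ N : ℕ, ∀ B : Multiset G, B.prod = 1 →
      (∀ g ∉ G₀, ∀ [DecidableEq G], count g B ≤ K) →
      ∃ d ∈ deltaStar G, IsAAMP ((fun k : ℕ => (k : ℤ)) '' Ln B) d N := by
  classical
  induction n with
  | zero =>
    intro G₀ hG K
    obtain ⟨K', N, h⟩ := core hne G₀ K
    refine ⟨N, fun B hB h1 => h B hB h1 ?_⟩
    have : G₀ = ∅ := by
      rw [← Set.ncard_eq_zero]; omega
    intro g hg
    simp [this] at hg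
  | succ n ih =>
    intro G₀ hG K
    obtain ⟨K', N, h⟩ := core hne G₀ K
    have hrec : ∀ g : G, ∃ N : ℕ, g ∈ G₀ → ∀ B : Multiset G, B.prod = 1 →
      (∀ g' ∉ G₀ \ {g}, ∀ [DecidableEq G], count g' B ≤ max K K') →
      ∃ d ∈ deltaStar G, IsAAMP ((fun k : ℕ => (k : ℤ)) '' Ln B) d N := by
      intro g
      by_cases hg : g ∈ G₀
      · obtain ⟨N, hN⟩ := ih (G₀ \ {g}) (by
          have := Set.ncard_sdiff_singleton_add_one hg (Set.toFinite _)
          omega) (max K K')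
        exact ⟨N, fun _ => hN⟩
      · exact ⟨0, fun h => absurd h hg⟩
    choose N' hN' using hrec
    have := Fintype.ofFinite G
    refine ⟨N + ∑ g, N' g, fun B hB h1 => ?_⟩
    by_cases hall : ∀ g ∈ G₀, K' ≤ count g B
    · obtain ⟨d, hd, hA⟩ := h B hB h1 (fun g hg inst => by
        convert hall g hg)
      exact ⟨d, hd, aamp_mono (Nat.le_add_right _ _) hA⟩
    · push Not at hall
      obtain ⟨g, hg, hlt⟩ := hall
      obtain ⟨d, hd, hA⟩ := hN' g hg B hB (by
        intro g' hg' inst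
        by_cases hgg : g' ∈ G₀
        · have : g' = g := by
            by_contra hne
            exact hg' ⟨hgg, hne⟩
          subst this
          refine le_trans (le_of_eq ?_) (hlt.le.trans (le_max_right _ _))
          congr!
        · exact (h1 g' hgg).trans (le_max_left _ _))
      refine ⟨d, hd, aamp_mono ?_ hA⟩
      have := Finset.single_le_sum (f := N') (fun i _ => Nat.zero_le _) (Finset.mem_univ g)
      omega

lemma at_of_card_le {s : Multiset G} (hp : s.prod = 1) (h0 : s ≠ 0) (h1 : (1 : G) ∉ s)
    (hc : card s ≤ 3) : At s := by
  rw [at_iff]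
  refine ⟨hp, h0, fun t u ht hu e => ?_⟩
  have key : ∀ v : Multiset G, v ≤ s → v.prod = 1 → card v ≠ 1 := by
    intro v hv hvp hvc
    obtain ⟨x, rfl⟩ := card_eq_one.1 hvc
    rw [prod_singleton] at hvp
    apply h1
    rw [← hvp]
    exact mem_of_le hv (mem_singleton_self x)
  have k1 := key t (by rw [e]; exact Multiset.le_add_right _ _) ht
  have k2 := key u (by rw [e]; exact Multiset.le_add_left _ _) hu
  have hcc := congrArg card e
  rw [card_add] at hcc
  rw [← card_eq_zero, ← card_eq_zero (s := u)]
  omega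

/-- `Δ*(G)` is nonempty for `|G| ≥ 3` -/
lemma deltaStar_ne [Finite G] (h3 : 3 ≤ Nat.card G) : ∃ d : ℕ, 0 < d ∧ (d : ℤ) ∈ deltaStar G := by
  suffices h : diffs (Set.univ : Set G) ≠ ⊥ by
    obtain ⟨d, hd, hdm, hdvd⟩ := exists_gen _ h
    exact ⟨d, hd, gen_mem_deltaStar _ hd hdm hdvd⟩
  suffices h : ∃ (T : Multiset G) (a b : ℕ), a ∈ Ln T ∧ b ∈ Ln T ∧ a ≠ b by
    obtain ⟨T, a, b, ha, hb, hab⟩ := h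
    intro hbot
    have : (a : ℤ) - b ∈ diffs (Set.univ : Set G) := ⟨T, fun _ _ => trivial, a, ha, b, hb, rfl⟩
    rw [hbot, AddSubgroup.mem_bot] at this
    omega
  by_cases hsq : ∃ g : G, g * g ≠ 1
  · obtain ⟨g, hg⟩ := hsq
    have hg1 : g ≠ 1 := by rintro rfl; simp at hg
    have hn : 0 < orderOf g := orderOf_pos g
    have hn1 : orderOf g ≠ 1 := by rw [Ne, orderOf_eq_one_iff]; exact hg1
    have hn2 : orderOf g ≠ 2 := by
      intro h
      have := pow_orderOf_eq_one g
      rw [h, pow_two] at this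
      exact hg this
    have key : ∀ x : G, orderOf x = orderOf g → At (replicate (orderOf g) x) := by
      intro x hx
      rw [at_iff]
      refine ⟨by rw [prod_replicate, ← hx, pow_orderOf_eq_one], ?_, ?_⟩
      · intro h
        have := congrArg card h
        rw [card_replicate, card_zero] at this
        omega
      · intro t u ht hu e
        have htle : t ≤ replicate (orderOf g) x := by rw [e]; exact Multiset.le_add_right _ _
        have hte := eq_replicate_card.2 (fun b hb => eq_of_mem_replicate (mem_of_le htle hb))
        rw [hte, prod_replicate] at ht
        have hdv := orderOf_dvd_of_pow_eq_one ht
        have hcc := congrArg card e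
        rw [card_replicate, card_add] at hcc
        rw [← card_eq_zero, ← card_eq_zero (s := u)]
        by_contra! hc
        have := Nat.le_of_dvd (by omega) hdv
        omega
    refine ⟨orderOf g • ({g, g⁻¹} : Multiset G), 2, orderOf g, ?_, ?_, by omega⟩
    · have := Ln_add (Ln_atom (key g rfl)) (Ln_atom (key g⁻¹ (orderOf_inv g)))
      convert this using 1
      rw [← nsmul_singleton, ← nsmul_singleton, ← nsmul_add]
      rfl
    · refine ⟨replicate (orderOf g) {g, g⁻¹}, by simp, ?_, by simp⟩
      intro t ht
      rw [eq_of_mem_replicate ht]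
      apply at_of_card_le <;> simp [hg1, Ne.symm hg1]
  · push Not at hsq
    have := Fintype.ofFinite G
    rw [Nat.card_eq_fintype_card] at h3
    obtain ⟨x, y, z, hxy, hxz, hyz⟩ := Fintype.two_lt_card_iff.1 h3
    obtain ⟨a, b, ha, hb, hab⟩ : ∃ a b : G, a ≠ 1 ∧ b ≠ 1 ∧ a ≠ b := by
      refine ⟨x⁻¹ * y, x⁻¹ * z, ?_, ?_, ?_⟩
      · rw [Ne, inv_mul_eq_one]; exact hxy
      · rw [Ne, inv_mul_eq_one]; exact hxz
      · simpa using hyz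
    have hc : a * b ≠ 1 := by
      intro h
      apply hab
      have := hsq a
      rw [← h] at this
      exact mul_left_cancel this
    have h2 : ∀ g : G, g ≠ 1 → 1 ∈ Ln ({g, g} : Multiset G) := by
      intro g hg
      apply Ln_atom
      apply at_of_card_le <;> simp [hsq, Ne.symm hg]
    have h3 : 1 ∈ Ln ({a, b, a * b} : Multiset G) := by
      apply Ln_atom
      apply at_of_card_le <;> simp [Ne.symm ha, Ne.symm hb, Ne.symm hc, ← mul_assoc]
      rw [mul_assoc (a * b), hsq]
    refine ⟨_, 2, 3, Ln_add h3 h3, ?_, by norm_num⟩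
    have := Ln_add (Ln_add (h2 a ha) (h2 b hb)) (h2 _ hc)
    convert this using 1
    simp only [insert_eq_cons, ← singleton_add]
    abel_nf

lemma zs_aamp [Finite G] (h3 : 3 ≤ Nat.card G) :
    ∃ N : ℕ, ∀ B : Multiset G, B.prod = 1 →
      ∃ d ∈ deltaStar G, IsAAMP ((fun k : ℕ => (k : ℤ)) '' Ln B) d N := by
  obtain ⟨N, h⟩ := zs_aamp_aux (deltaStar_ne h3) _ (Set.univ : Set G) le_rfl 0
  exact ⟨N, fun B hB => h B hB (fun g hg => absurd (Set.mem_univ g) hg)⟩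

end Core

section Transfer

open UniqueFactorizationMonoid

variable {R : Type*} [CommRing R] [IsDedekindDomain R]

open Classical in
/-- the class of an ideal -/
noncomputable def cls (I : Ideal R) : ClassGroup R :=
  if h : I ≠ 0 then ClassGroup.mk0 ⟨I, mem_nonZeroDivisors_of_ne_zero h⟩ else 1

lemma cls_mul {I J : Ideal R} (hI : I ≠ 0) (hJ : J ≠ 0) : cls (I * J) = cls I * cls J := by
  rw [cls, cls, cls, dif_pos hI, dif_pos hJ, dif_pos (mul_ne_zero hI hJ), ← map_mul]
  rfl

lemma cls_eq_one {I : Ideal R} (hI : I ≠ 0) : cls I = 1 ↔ I.IsPrincipal := by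
  rw [cls, dif_pos hI]
  exact ClassGroup.mk0_eq_one_iff _

lemma cls_one : cls (1 : Ideal R) = 1 := by
  rw [cls_eq_one one_ne_zero]
  exact ⟨1, by simp [Ideal.one_eq_top]⟩

lemma cls_prod (s : Multiset (Ideal R)) (hs : ∀ I ∈ s, Prime I) :
    s.prod ≠ 0 ∧ (s.map cls).prod = cls s.prod := by
  induction s using Multiset.induction_on with
  | empty => exact ⟨by simp, by rw [map_zero, prod_zero, prod_zero, cls_one]⟩
  | cons I s ih =>
    obtain ⟨h1, h2⟩ := ih (fun J hJ => hs J (mem_cons_of_mem hJ))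
    have hI := (hs I (mem_cons_self I s)).ne_zero
    rw [prod_cons, map_cons, prod_cons, h2, cls_mul hI h1]
    exact ⟨mul_ne_zero hI h1, rfl⟩

/-- the block homomorphism -/
noncomputable def blk (a : R) : Multiset (ClassGroup R) :=
  (normalizedFactors (Ideal.span {a})).map cls

lemma span_ne_zero {a : R} (ha : a ≠ 0) : (Ideal.span {a} : Ideal R) ≠ 0 := by
  simpa [Ideal.zero_eq_bot] using ha

lemma blk_prod {a : R} (ha : a ≠ 0) : (blk a).prod = 1 := by
  rw [blk, (cls_prod _ (fun I hI => prime_of_normalized_factor I hI)).2,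
    Ideal.prod_normalizedFactors_eq_self (span_ne_zero ha), cls_eq_one (span_ne_zero ha)]
  exact ⟨a, rfl⟩

lemma blk_mul {a b : R} (ha : a ≠ 0) (hb : b ≠ 0) : blk (a * b) = blk a + blk b := by
  rw [blk, ← Ideal.span_singleton_mul_span_singleton,
    normalizedFactors_mul (span_ne_zero ha) (span_ne_zero hb), Multiset.map_add]
  rfl

lemma blk_eq_zero {a : R} (ha : a ≠ 0) : blk a = 0 ↔ IsUnit a := by
  rw [blk, Multiset.map_eq_zero]
  constructor
  · intro h
    have := Ideal.prod_normalizedFactors_eq_self (span_ne_zero ha)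
    rw [h, prod_zero] at this
    rw [← Ideal.span_singleton_eq_top, ← this, Ideal.one_eq_top]
  · intro h
    rw [Ideal.span_singleton_eq_top.2 h, ← Ideal.one_eq_top, normalizedFactors_one]

lemma map_split {α β : Type*} (f : α → β) (s : Multiset α) :
    ∀ t u : Multiset β, s.map f = t + u →
      ∃ s₁ s₂, s = s₁ + s₂ ∧ s₁.map f = t ∧ s₂.map f = u := by
  induction s using Multiset.induction_on with
  | empty =>
    intro t u h
    have h' : t + u = 0 := by rw [← h]; simp
    rw [add_eq_zero] at h'
    exact ⟨0, 0, by simp, by simp [h'.1], by simp [h'.2]⟩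
  | cons a s ih =>
    intro t u h
    rw [map_cons] at h
    have hm : f a ∈ t + u := by rw [← h]; exact mem_cons_self _ _
    rcases mem_add.1 hm with hm | hm
    · obtain ⟨t', rfl⟩ := exists_cons_of_mem hm
      rw [cons_add, cons_inj_right] at h
      obtain ⟨s₁, s₂, e, h1, h2⟩ := ih _ _ h
      exact ⟨a ::ₘ s₁, s₂, by rw [cons_add, e], by rw [map_cons, h1], h2⟩
    · obtain ⟨u', rfl⟩ := exists_cons_of_mem hm
      rw [add_cons, cons_inj_right] at h
      obtain ⟨s₁, s₂, e, h1, h2⟩ := ih _ _ h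
      exact ⟨s₁, a ::ₘ s₂, by rw [add_cons, e], h1, by rw [map_cons, h2]⟩

lemma blk_split {a : R} (ha : a ≠ 0) {t u : Multiset (ClassGroup R)} (h : blk a = t + u)
    (ht : t.prod = 1) : ∃ b c : R, b ≠ 0 ∧ c ≠ 0 ∧ Associated (b * c) a ∧ blk b = t ∧ blk c = u := by
  have hu : u.prod = 1 := prod_right h (blk_prod ha) ht
  obtain ⟨s₁, s₂, e, h1, h2⟩ := map_split cls _ t u h
  have hp1 : ∀ I ∈ s₁, Prime I := fun I hI =>
    prime_of_normalized_factor I (by rw [e]; exact mem_add.2 (Or.inl hI))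
  have hp2 : ∀ I ∈ s₂, Prime I := fun I hI =>
    prime_of_normalized_factor I (by rw [e]; exact mem_add.2 (Or.inr hI))
  have key : ∀ (s : Multiset (Ideal R)) (v : Multiset (ClassGroup R)), (∀ I ∈ s, Prime I) →
      s.map cls = v → v.prod = 1 → ∃ b : R, b ≠ 0 ∧ s.prod = Ideal.span {b} ∧ blk b = v := by
    intro s v hs hv hvp
    obtain ⟨k1, k2⟩ := cls_prod s hs
    rw [hv, hvp] at k2
    obtain ⟨b, hb⟩ := (cls_eq_one k1).1 k2.symm
    have hb' : s.prod = Ideal.span {b} := hb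
    refine ⟨b, ?_, hb', ?_⟩
    · rintro rfl
      apply k1
      rw [hb']; simp
    · rw [blk, ← hb', normalizedFactors_prod_of_prime hs, hv]
  obtain ⟨b, hb0, hb, hbt⟩ := key s₁ t hp1 h1 ht
  obtain ⟨c, hc0, hc, hcu⟩ := key s₂ u hp2 h2 hu
  refine ⟨b, c, hb0, hc0, ?_, hbt, hcu⟩
  rw [← Ideal.span_singleton_eq_span_singleton, ← Ideal.span_singleton_mul_span_singleton,
    ← hb, ← hc, ← prod_add, ← e, Ideal.prod_normalizedFactors_eq_self (span_ne_zero ha)]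

lemma irreducible_iff_at {a : R} (ha : a ≠ 0) : Irreducible a ↔ At (blk a) := by
  rw [at_iff]
  constructor
  · intro h
    refine ⟨blk_prod ha, fun h0 => h.not_isUnit ((blk_eq_zero ha).1 h0), ?_⟩
    intro t u ht hu e
    obtain ⟨b, c, hb, hc, hbc, rfl, rfl⟩ := blk_split ha e ht
    rw [blk_eq_zero hb, blk_eq_zero hc]
    exact (hbc.symm.irreducible h).isUnit_or_isUnit rfl
  · rintro ⟨h1, h2, h3⟩
    refine ⟨fun hu => h2 ((blk_eq_zero ha).2 hu), ?_⟩
    intro b c e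
    have hb : b ≠ 0 := by rintro rfl; simp at e; exact ha e
    have hc : c ≠ 0 := by rintro rfl; simp at e; exact ha e
    rw [← blk_eq_zero hb, ← blk_eq_zero hc]
    exact h3 _ _ (blk_prod hb) (blk_prod hc) (by rw [e, blk_mul hb hc])

lemma blk_multiset_prod (s : Multiset R) (hs : ∀ u ∈ s, Irreducible u) :
    s.prod ≠ 0 ∧ (s.map blk).sum = blk s.prod := by
  induction s using Multiset.induction_on with
  | empty =>
    refine ⟨by simp, ?_⟩
    rw [map_zero, sum_zero, prod_zero, eq_comm, blk_eq_zero one_ne_zero]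
    exact isUnit_one
  | cons a s ih =>
    obtain ⟨h1, h2⟩ := ih (fun J hJ => hs J (mem_cons_of_mem hJ))
    have ha := (hs a (mem_cons_self a s)).ne_zero
    rw [prod_cons, map_cons, sum_cons, h2, blk_mul ha h1]
    exact ⟨mul_ne_zero ha h1, rfl⟩

lemma lift_fact (f : Multiset (Multiset (ClassGroup R))) (hf : ∀ t ∈ f, At t) :
    ∀ a : R, a ≠ 0 → blk a = f.sum →
      ∃ s : Multiset R, (∀ u ∈ s, Irreducible u) ∧ card s = card f ∧ Associated s.prod a := by
  induction f using Multiset.induction_on with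
  | empty =>
    intro a ha h
    rw [sum_zero, blk_eq_zero ha] at h
    exact ⟨0, by simp, rfl, by simpa using (associated_one_iff_isUnit.2 h).symm⟩
  | cons t f ih =>
    intro a ha h
    rw [sum_cons] at h
    have hat := hf t (mem_cons_self t f)
    obtain ⟨b, c, hb, hc, hbc, hbt, hcu⟩ := blk_split ha h hat.prod
    obtain ⟨s, h1, h2, h3⟩ := ih (fun t ht => hf t (mem_cons_of_mem ht)) c hc hcu
    refine ⟨b ::ₘ s, ?_, by rw [card_cons, card_cons, h2], ?_⟩
    · intro u hu
      rcases mem_cons.1 hu with rfl | hu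
      · rw [irreducible_iff_at hb, hbt]; exact hat
      · exact h1 u hu
    · rw [prod_cons]
      exact (h3.mul_left b).trans hbc

lemma setOfLengths_eq {a : R} (ha : a ≠ 0) (hu : ¬ IsUnit a) : setOfLengths a = Ln (blk a) := by
  ext k
  constructor
  · rintro ⟨s, h1, h2, rfl⟩
    refine ⟨s.map blk, by rw [card_map, h2], ?_, (blk_multiset_prod s h1).2⟩
    intro t ht
    obtain ⟨u, hu, rfl⟩ := mem_map.1 ht
    exact (irreducible_iff_at (h1 u hu).ne_zero).1 (h1 u hu)
  · rintro ⟨f, h1, h2, h3⟩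
    obtain ⟨s, k1, k2, v, hv⟩ := lift_fact f h2 a ha h3.symm
    have hs : s ≠ 0 := by
      rintro rfl
      apply hu
      rw [← hv]; simp
    obtain ⟨x, hx⟩ := exists_mem_of_ne_zero hs
    obtain ⟨s', rfl⟩ := exists_cons_of_mem hx
    refine ⟨(x * v) ::ₘ s', ?_, ?_, ?_⟩
    · intro u hu
      rcases mem_cons.1 hu with rfl | hu
      · have : Associated x (x * v) := ⟨v, rfl⟩
        exact this.irreducible (k1 x hx)
      · exact k1 u (mem_cons_of_mem hu)
    · rw [card_cons, ← h1, ← k2, card_cons]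
    · rw [prod_cons, ← hv, prod_cons]; ring

end Transfer

end AAMPProof

/-- **Corollary 4.4(1).** Let `R` be a Dedekind domain, not a field, whose class group is
finite of order at least `3` and such that every class contains infinitely many nonzero
prime ideals. Then there is a bound `N` such that every set of lengths of `R` is an AAMP
with some difference `d ∈ Δ*(Cl(R))` and bound `N`. -/
theorem setOfLengths_is_AAMP {R : Type*} [CommRing R] [IsDedekindDomain R]
    (hR : ¬ IsField R) (hfin : Finite (ClassGroup R)) (hcard : 3 ≤ Nat.card (ClassGroup R))
    (hprimes : ∀ g : ClassGroup R,
      {P : (Ideal R)⁰ | (P : Ideal R).IsPrime ∧ ClassGroup.mk0 P = g}.Infinite) :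
    ∃ N : ℕ, ∀ a : R, a ≠ 0 → ¬ IsUnit a →
      ∃ d ∈ deltaStar (ClassGroup R),
        IsAAMP ((fun k : ℕ => (k : ℤ)) '' setOfLengths a) d N := by
  obtain ⟨N, hN⟩ := AAMPProof.zs_aamp hcard
  refine ⟨N, fun a ha hu => ?_⟩
  rw [AAMPProof.setOfLengths_eq ha hu]
  exact hN _ (AAMPProof.blk_prod ha)
end
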